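/- arXiv:0811.4230 — 2 statements merged into one kernel-verified Lean document; each statement's English description precedes it below -/
import Mathlib

section
/- Let (X,T) be a topological dynamical system with finite topological entropy, i.e. h_top(T,X) < ∞. Then for every real number h with 0 ≤ h ≤ h_top(T,X) there exists a non-empty compact subset K_h of X such that h^B(T,K_h) = h(T,K_h) = h. In particular, (X,T) is lowerable. -/
open Filter Set Metric MeasureTheory
open scoped ENNReal Topology

noncomputable section

variable {X Y : Type*}

def IsSep [PseudoMetricSpace X] (T : X → X) (n : ℕ) (ε : ℝ) (E : Set X) : Prop :=
  E.Pairwise fun x y => ∃ i < n, ε < dist (T^[i] x) (T^[i] y)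

def sepMaxCard [PseudoMetricSpace X] (T : X → X) (n : ℕ) (ε : ℝ) (K : Set X) : ℝ≥0∞ :=
  ⨆ (E : Finset X) (_ : ↑E ⊆ K ∧ IsSep T n ε (↑E : Set X)), (E.card : ℝ≥0∞)

def sepEnt [PseudoMetricSpace X] (T : X → X) (ε : ℝ) (K : Set X) : EReal :=
  Filter.atTop.limsup fun n : ℕ => ENNReal.log (sepMaxCard T n ε K) / (n : EReal)

def subEnt [PseudoMetricSpace X] (T : X → X) (K : Set X) : EReal :=
  ⨆ (ε : ℝ) (_ : 0 < ε), sepEnt T ε K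

/-- `(X,T)` is lowerable. -/
def Lowerable [PseudoMetricSpace X] (T : X → X) : Prop :=
  ∀ h : EReal, 0 ≤ h → h ≤ subEnt T (univ : Set X) →
    ∃ K : Set X, K.Nonempty ∧ IsCompact K ∧ subEnt T K = h

/-- `(X,T)` is hereditarily lowerable. -/
def HerLowerable [PseudoMetricSpace X] (T : X → X) : Prop :=
  ∀ K : Set X, K.Nonempty → IsCompact K → ∀ h : EReal, 0 ≤ h → h ≤ subEnt T K →
    ∃ K' : Set X, K' ⊆ K ∧ K'.Nonempty ∧ IsCompact K' ∧ subEnt T K' = h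

/-- `(X,T)` is hereditarily uniformly lowerable: the lowering subset can moreover be chosen
with at most one limit (accumulation) point. -/
def HUL [PseudoMetricSpace X] (T : X → X) : Prop :=
  ∀ K : Set X, K.Nonempty → IsCompact K → ∀ h : EReal, 0 ≤ h → h ≤ subEnt T K →
    ∃ K' : Set X, K' ⊆ K ∧ K'.Nonempty ∧ IsCompact K' ∧ subEnt T K' = h ∧
      {x | AccPt x (𝓟 K')}.Subsingleton

/-- `Φ_ε(x) = {y : d(T^n x, T^n y) ≤ ε for all n ≥ 0}`. -/
def Phi [PseudoMetricSpace X] (T : X → X) (ε : ℝ) (x : X) : Set X :=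
  {y | ∀ n : ℕ, dist (T^[n] x) (T^[n] y) ≤ ε}

/-- `h*_T(ε) = sup_x h(T, Φ_ε(x))`. -/
def hStar [PseudoMetricSpace X] (T : X → X) (ε : ℝ) : EReal :=
  ⨆ x : X, subEnt T (Phi T ε x)

/-- `(X,T)` is asymptotically `h`-expansive: `h*_T(ε) → 0` as `ε → 0+`. -/
def AsympHExpansive [PseudoMetricSpace X] (T : X → X) : Prop :=
  Tendsto (fun ε : ℝ => hStar T ε) (𝓝[>] 0) (𝓝 (0 : EReal))

/-- `T^n` for `n : ℤ`, for a homeomorphism `T`. -/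
def iterZ [TopologicalSpace X] (T : X ≃ₜ X) : ℤ → X → X
  | Int.ofNat n => (⇑T)^[n]
  | Int.negSucc n => (⇑T.symm)^[n + 1]

/-- `T` is expansive with expansive constant `δ`. -/
def ExpansiveWith [MetricSpace X] (T : X ≃ₜ X) (δ : ℝ) : Prop :=
  ∀ x y : X, x ≠ y → ∃ n : ℤ, δ < dist (iterZ T n x) (iterZ T n y)

/-- `K ⪰ 𝒲` : `K` is contained in some member of the family `𝒲`. -/
def Refines (K : Set X) (W : Finset (Set X)) : Prop := ∃ A ∈ W, K ⊆ A

/-- The join `U ∨ V` of two finite covers. -/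
def covJoin (U V : Finset (Set X)) : Finset (Set X) :=
  letI := Classical.decEq (Set X)
  (U ×ˢ V).image fun p => p.1 ∩ p.2

/-- `dynCov T U n = U_0^{n-1} = ⋁_{i=0}^{n-1} T^{-i} U` (with `U_0^{-1} = {univ}`). -/
def dynCov (T : X → X) (U : Finset (Set X)) : ℕ → Finset (Set X)
  | 0 => {(univ : Set X)}
  | n + 1 =>
      letI := Classical.decEq (Set X)
      covJoin (dynCov T U n) (U.image fun A => T^[n] ⁻¹' A)

/-- `n_{T,U}(K)`: `0` if `K ⋠ U`; `+∞` if `T^i K ⪰ U` for all `i`; otherwise the largest `j`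
with `T^i K ⪰ U` for all `0 ≤ i ≤ j-1`. -/
def nTU (T : X → X) (U : Finset (Set X)) (K : Set X) : ℕ∞ :=
  ⨆ (j : ℕ) (_ : ∀ i < j, Refines (T^[i] '' K) U), (j : ℕ∞)

/-- `e^{-λ n}` for `n : ℕ∞`, valued in `ℝ≥0∞` (with the conventions `e^{-λ·∞} = 0` for `λ > 0`,
`= 1` for `λ = 0` and `= ∞` for `λ < 0`). -/
def expWeight (lam : ℝ) (n : ℕ∞) : ℝ≥0∞ :=
  if n = ⊤ then (if 0 < lam then 0 else if lam = 0 then 1 else ⊤)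
  else ENNReal.ofReal (Real.exp (-(lam * (n.toNat : ℝ))))

/-- `m_{T,U}(K,λ,k)`: the infimum of `∑_{E ∈ 𝓔} e^{-λ n_{T,U}(E)}` over all countable families
`𝓔` of subsets of `X` with `∪𝓔 ⊇ K` and `E ⪰ U_0^{k-1}` for every `E ∈ 𝓔`. -/
def mTU (T : X → X) (U : Finset (Set X)) (K : Set X) (lam : ℝ) (k : ℕ) : ℝ≥0∞ :=
  ⨅ (ℰ : Set (Set X)) (_ : ℰ.Countable ∧ K ⊆ ⋃₀ ℰ ∧ ∀ E ∈ ℰ, Refines E (dynCov T U k)),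
    ∑' E : ℰ, expWeight lam (nTU T U (E : Set X))

/-- `m_{T,U}(K,λ) = lim_{k→∞} m_{T,U}(K,λ,k)`; since `m_{T,U}(K,λ,k)` is nondecreasing in `k`,
the limit is the supremum. -/
def mTUlim (T : X → X) (U : Finset (Set X)) (K : Set X) (lam : ℝ) : ℝ≥0∞ :=
  ⨆ k : ℕ, mTU T U K lam k

/-- `h^B_U(T,K) = inf {λ : m_{T,U}(K,λ) = 0}`. -/
def hBU (T : X → X) (U : Finset (Set X)) (K : Set X) : EReal :=
  ⨅ (lam : ℝ) (_ : mTUlim T U K lam = 0), (lam : EReal)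

/-- The dimensional entropy `h^B(T,K) = sup_U h^B_U(T,K)`, supremum over finite open covers. -/
def hB [TopologicalSpace X] (T : X → X) (K : Set X) : EReal :=
  ⨆ (U : Finset (Set X)) (_ : (∀ A ∈ U, IsOpen A) ∧ ⋃₀ (↑U : Set (Set X)) = univ),
    hBU T U K

/-- `N(U,K)`: the minimal cardinality of a subfamily of `U` covering `K` (`0` for `K = ∅`,
`∞` if no subfamily covers `K`). -/
def covCard (U : Finset (Set X)) (K : Set X) : ℝ≥0∞ :=
  ⨅ (V : Finset (Set X)) (_ : V ⊆ U ∧ K ⊆ ⋃₀ (↑V : Set (Set X))), (V.card : ℝ≥0∞)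

/-- `h_U(T,K) = limsup_{n→∞} (1/n) log N(U_0^{n-1},K)`. -/
def hCov (T : X → X) (U : Finset (Set X)) (K : Set X) : EReal :=
  Filter.atTop.limsup fun n : ℕ => ENNReal.log (covCard (dynCov T U n) K) / (n : EReal)

/-- Topological entropy of a subset via open covers: `h(T,K) = sup_U h_U(T,K)`. -/
def hCovSup [TopologicalSpace X] (T : X → X) (K : Set X) : EReal :=
  ⨆ (U : Finset (Set X)) (_ : (∀ A ∈ U, IsOpen A) ∧ ⋃₀ (↑U : Set (Set X)) = univ),
    hCov T U K

/-- The atom of the (finite) partition `P` containing `x`. -/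
def atomAt (P : Finset (Set X)) (x : X) : Set X := ⋃₀ {A | A ∈ P ∧ x ∈ A}

/-- `P` is a finite Borel partition. -/
def IsFinPartition [MeasurableSpace X] (P : Finset (Set X)) : Prop :=
  (∀ A ∈ P, MeasurableSet A) ∧ ⋃₀ (↑P : Set (Set X)) = univ ∧
    (↑P : Set (Set X)).Pairwise fun A B => Disjoint A B

/-- The Shannon entropy `H_μ(P) = ∑_{A ∈ P} -μ(A) log μ(A)` of a finite partition. -/
def partEnt [MeasurableSpace X] (μ : Measure X) (P : Finset (Set X)) : ℝ :=
  ∑ A ∈ P, -((μ A).toReal * Real.log (μ A).toReal)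

/-- The measure-theoretic (Kolmogorov–Sinai) entropy `h_μ(T)`: the supremum over finite Borel
partitions `P` of `lim_n (1/n) H_μ(P_0^{n-1})`; by subadditivity this limit is the infimum. -/
def ksEntropy [MeasurableSpace X] (T : X → X) (μ : Measure X) : EReal :=
  ⨆ (P : Finset (Set X)) (_ : IsFinPartition P),
    ⨅ n : ℕ, ((partEnt μ (dynCov T P (n + 1)) / (n + 1) : ℝ) : EReal)

/-- `π` is a principal factor map from `(X,T)` to `(Y,S)` : `h_μ(T) = h_{πμ}(S)` for every
`T`-invariant Borel probability measure `μ`. -/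
def IsPrincipal [MeasurableSpace X] [MeasurableSpace Y] (T : X → X) (S : Y → Y)
    (π : X → Y) : Prop :=
  ∀ μ : Measure X, IsProbabilityMeasure μ → Measure.map T μ = μ →
    ksEntropy T μ = ksEntropy S (Measure.map π μ)

/-- The relative topological entropy `h_top(T,X|π) = sup_{y ∈ Y} h(T, π^{-1}(y))`. -/
def relEnt [PseudoMetricSpace X] (T : X → X) (π : X → Y) : EReal :=
  ⨆ y : Y, subEnt T (π ⁻¹' {y})

/-- The canonical conversion `EReal → ℝ≥0∞` (`⊥` and negative reals go to `0`). -/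
def erealToENNReal (x : EReal) : ℝ≥0∞ := if x = ⊤ then ⊤ else ENNReal.ofReal x.toReal
/-!
Fix `l` slightly below `h_top(T, X)`. A Frostman-type argument with a finitely additive content in
place of a measure yields a content on `X` giving mass at most `exp (-l * n)` to sets of small
diameter in the `n`-th Bowen metric. Discarding a small share of the content, one splits `X`
successively into cells which the metric separates; letting the masses of the cells be the
lengths of nested intervals codes points of `X` by numbers in `(0, 2]`, at scale `exp (-l * n)`.

For `0 < s ≤ 1` choose sets of reals `C` and `D`, of box dimensions `s` and `1 - s`, such that
`C + D` contains `[0, 1]`, and let `K t` be the set of points coded by `C + t`. A cover of `K t`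
with small sum `∑ exp (-λ * n)` for some `λ ≤ s * l` would make `C + t + D` too small in Lebesgue
measure, so `h^B(T, K t) ≥ s * l`. Conversely `t` lies in (codes of a Bowen ball) `- C` for each
ball which `K t` meets, so by Markov's inequality and Borel–Cantelli `K t` meets at most
`exp ((h_top - (1 - s) * l + o(1)) * n)` balls for almost every `t`. As `l → h_top` both bounds
tend to `s * h_top`.

Finally, pieces on which both entropies are closer and closer to `h`, concentrating around the orbit
of one point, are glued together: the union gains only a factor `n + 1` in its separation numbers.
-/

section BowenBall

variable [PseudoMetricSpace X] {T : X → X} {m n : ℕ} {ε δ : ℝ} {x y : X} {A K L : Set X}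

/-- The closed ball of centre `y` and radius `ε` for the Bowen metric `d_n`. -/
def bowenBall (T : X → X) (n : ℕ) (ε : ℝ) (y : X) : Set X :=
  {x | ∀ i < n, dist (T^[i] x) (T^[i] y) ≤ ε}

/-- The `d_n`-diameter of `A` is at most `ε`. -/
def BowenDiamLE (T : X → X) (n : ℕ) (ε : ℝ) (A : Set X) : Prop :=
  ∀ x ∈ A, ∀ y ∈ A, ∀ i < n, dist (T^[i] x) (T^[i] y) ≤ ε

lemma mem_bowenBall_self (hε : 0 ≤ ε) : x ∈ bowenBall T n ε x := fun i _ => by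
  simpa only [dist_self] using hε

lemma bowenBall_subset (hmn : m ≤ n) (hεδ : ε ≤ δ) : bowenBall T n ε x ⊆ bowenBall T m δ x :=
  fun _ hz i hi => (hz i (hi.trans_le hmn)).trans hεδ

lemma bowenDiamLE_bowenBall : BowenDiamLE T n ε (bowenBall T n (ε / 2) x) :=
  fun y hy z hz i hi => calc
    dist (T^[i] y) (T^[i] z) ≤ dist (T^[i] y) (T^[i] x) + dist (T^[i] z) (T^[i] x) :=
      dist_triangle_right _ _ _
    _ ≤ ε := by linarith [hy i hi, hz i hi]

lemma BowenDiamLE.mono (hA : BowenDiamLE T n ε A) (hK : K ⊆ A) (hmn : m ≤ n) :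
    BowenDiamLE T m ε K :=
  fun x hx y hy i hi => hA x (hK hx) y (hK hy) i (hi.trans_le hmn)

lemma isClosed_bowenBall (hT : Continuous T) : IsClosed (bowenBall T n ε x) := by
  simp only [bowenBall, ofPred_forall]
  exact isClosed_iInter fun i => isClosed_iInter fun _ =>
    isClosed_le ((hT.iterate i).dist continuous_const) continuous_const

lemma bowenBall_mem_nhds (hT : Continuous T) (hε : 0 < ε) : bowenBall T n ε x ∈ 𝓝 x := by
  have hclose (i : ℕ) : ∀ᶠ z in 𝓝 x, dist (T^[i] z) (T^[i] x) ≤ ε :=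
    (hT.iterate i).continuousAt.eventually (closedBall_mem_nhds _ hε)
  exact (Filter.eventually_all_finite (Set.finite_lt_nat n)).2 fun i _ => hclose i

lemma exists_finset_bowenBall_cover [CompactSpace X] (hT : Continuous T) (n : ℕ) (hε : 0 < ε) :
    ∃ S : Finset X, ∀ x, ∃ y ∈ S, x ∈ bowenBall T n ε y := by
  obtain ⟨S, -, hS⟩ := isCompact_univ.elim_nhds_subcover (bowenBall T n ε)
    fun x _ => bowenBall_mem_nhds hT hε
  exact ⟨S, fun x => by simpa only [mem_iUnion₂, exists_prop] using hS (mem_univ x)⟩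

lemma sepMaxCard_le_iff {c : ℝ≥0∞} :
    sepMaxCard T n ε K ≤ c ↔ ∀ E : Finset X, ↑E ⊆ K → IsSep T n ε ↑E → (E.card : ℝ≥0∞) ≤ c := by
  simp only [sepMaxCard, iSup_le_iff, and_imp]

lemma card_le_sepMaxCard {E : Finset X} (hEK : ↑E ⊆ K) (hE : IsSep T n ε ↑E) :
    (E.card : ℝ≥0∞) ≤ sepMaxCard T n ε K :=
  sepMaxCard_le_iff.1 le_rfl E hEK hE

lemma sepMaxCard_mono (hKL : K ⊆ L) (hδε : δ ≤ ε) : sepMaxCard T n ε K ≤ sepMaxCard T n δ L :=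
  sepMaxCard_le_iff.2 fun _ hEK hE => card_le_sepMaxCard (hEK.trans hKL) <|
    hE.mono' fun _ _ ⟨i, hi, h⟩ => ⟨i, hi, hδε.trans_lt h⟩

lemma sepMaxCard_empty : sepMaxCard T n ε ∅ = 0 := by
  refine le_antisymm (sepMaxCard_le_iff.2 fun E hE _ => ?_) zero_le
  simp [Finset.coe_eq_empty.1 (subset_empty_iff.1 hE)]

lemma one_le_sepMaxCard (hK : K.Nonempty) : 1 ≤ sepMaxCard T n ε K := by
  obtain ⟨x, hx⟩ := hK
  have hsep : IsSep T n ε (({x} : Finset X) : Set X) := by simp [IsSep]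
  simpa using card_le_sepMaxCard (K := K) (by simpa using hx) hsep

lemma sepMaxCard_le_card_of_cover {ι : Type*} {S : Finset ι} {B : ι → Set X}
    (hB : ∀ i ∈ S, BowenDiamLE T n ε (B i)) (hK : ∀ x ∈ K, ∃ i ∈ S, x ∈ B i) :
    sepMaxCard T n ε K ≤ S.card := by
  refine sepMaxCard_le_iff.2 fun E hEK hE => ?_
  choose f hfS hfB using fun x : E => hK x (hEK x.2)
  rw [← Fintype.card_coe E, ← Finset.card_univ]
  refine mod_cast Finset.card_le_card_of_injOn f (fun x _ => hfS x) fun x _ y _ hxy => ?_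
  by_contra hne
  obtain ⟨i, hi, hlt⟩ := hE x.2 y.2 (Subtype.coe_ne_coe.2 hne)
  exact hlt.not_ge (hB _ (hfS x) x (hfB x) y (hxy ▸ hfB y) i hi)

lemma sepMaxCard_le_one (hK : BowenDiamLE T n ε K) : sepMaxCard T n ε K ≤ 1 := by
  simpa using sepMaxCard_le_card_of_cover (S := {()}) (fun _ _ => hK) fun x hx => ⟨(), by simp, hx⟩

lemma sepMaxCard_union_le : sepMaxCard T n ε (K ∪ L) ≤ sepMaxCard T n ε K + sepMaxCard T n ε L := by
  classical
  refine sepMaxCard_le_iff.2 fun E hEKL hE => ?_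
  have hcard := Finset.card_filter_add_card_filter_not (s := E) (· ∈ K)
  have hsub (p : X → Prop) [DecidablePred p] : (↑(E.filter p) : Set X) ⊆ E :=
    Finset.coe_subset.2 (E.filter_subset p)
  rw [← hcard, Nat.cast_add]
  refine add_le_add (card_le_sepMaxCard (fun x hx => ?_) (hE.mono (hsub _)))
    (card_le_sepMaxCard (fun x hx => ?_) (hE.mono (hsub _)))
  · exact (Finset.mem_filter.1 hx).2
  · obtain ⟨hxE, hxK⟩ := Finset.mem_filter.1 hx
    exact (hEKL hxE).resolve_left hxK

lemma sepMaxCard_biUnion_le {ι : Type*} (S : Finset ι) (B : ι → Set X) :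
    sepMaxCard T n ε (⋃ i ∈ S, B i) ≤ ∑ i ∈ S, sepMaxCard T n ε (B i) := by
  classical
  induction S using Finset.induction_on with
  | empty => simp [sepMaxCard_empty]
  | insert a S ha ih =>
    rw [Finset.set_biUnion_insert, Finset.sum_insert ha]
    exact sepMaxCard_union_le.trans (add_le_add_right ih _)

lemma sepMaxCard_lt_top [CompactSpace X] (hT : Continuous T) (hε : 0 < ε) :
    sepMaxCard T n ε K < ⊤ := by
  obtain ⟨S, hS⟩ := exists_finset_bowenBall_cover hT n (half_pos hε)
  exact (sepMaxCard_le_card_of_cover (fun _ _ => bowenDiamLE_bowenBall) fun x _ => hS x).trans_lt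
    (ENNReal.natCast_lt_top _)

lemma exists_isSep_card_eq (hK : sepMaxCard T n ε K < ⊤) :
    ∃ S : Finset X, ↑S ⊆ K ∧ IsSep T n ε ↑S ∧ (S.card : ℝ≥0∞) = sepMaxCard T n ε K := by
  let cards : Set ℕ := {c | ∃ S : Finset X, ↑S ⊆ K ∧ IsSep T n ε ↑S ∧ S.card = c}
  have hne : cards.Nonempty := ⟨0, ∅, by simp [IsSep]⟩
  have hbdd : BddAbove cards := by
    obtain ⟨N, hN⟩ := ENNReal.exists_nat_gt hK.ne
    refine ⟨N, ?_⟩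
    rintro _ ⟨S, hSK, hS, rfl⟩
    exact mod_cast (card_le_sepMaxCard hSK hS).trans hN.le
  obtain ⟨S, hSK, hS, hcard⟩ := Nat.sSup_mem hne hbdd
  refine ⟨S, hSK, hS, (card_le_sepMaxCard hSK hS).antisymm ?_⟩
  refine sepMaxCard_le_iff.2 fun E hEK hE => ?_
  exact mod_cast hcard ▸ le_csSup hbdd ⟨E, hEK, hE, rfl⟩

lemma IsSep.exists_mem_bowenBall {S : Finset X} (hS : IsSep T n ε ↑S) (hSK : ↑S ⊆ K) (hε : 0 ≤ ε)
    (hmax : sepMaxCard T n ε K ≤ S.card) (hx : x ∈ K) : ∃ y ∈ S, x ∈ bowenBall T n ε y := by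
  classical
  by_contra! hfar
  have hxS : x ∉ S := fun hxS => hfar x hxS (mem_bowenBall_self hε)
  have hsep : IsSep T n ε ↑(insert x S) := by
    rw [Finset.coe_insert]
    refine Set.pairwise_insert.2 ⟨hS, fun y hy _ => ?_⟩
    have hxy : ∃ i < n, ε < dist (T^[i] x) (T^[i] y) := by
      simpa only [bowenBall, mem_ofPred_eq, not_forall, not_le, exists_prop] using hfar y hy
    exact ⟨hxy, by simpa only [dist_comm] using hxy⟩
  have hcard := (card_le_sepMaxCard (by
    rw [Finset.coe_insert]; exact insert_subset hx hSK) hsep).trans hmax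
  rw [Finset.card_insert_of_notMem hxS] at hcard
  exact absurd (mod_cast hcard : S.card + 1 ≤ S.card) (by lia)

lemma sepMaxCard_closure_le (hT : Continuous T) (hε : 0 ≤ ε) :
    sepMaxCard T n ε (closure K) ≤ sepMaxCard T n (ε / 2) K := by
  rcases eq_top_or_lt_top (sepMaxCard T n (ε / 2) K) with htop | hlt
  · exact le_top.trans_eq htop.symm
  obtain ⟨S, hSK, hS, hcard⟩ := exists_isSep_card_eq hlt
  have hK : K ⊆ ⋃ y ∈ S, bowenBall T n (ε / 2) y := fun x hx => by
    simpa only [mem_iUnion₂, exists_prop] using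
      hS.exists_mem_bowenBall hSK (by positivity) hcard.ge hx
  have hclosure : closure K ⊆ ⋃ y ∈ S, bowenBall T n (ε / 2) y :=
    closure_minimal hK (isClosed_biUnion_finset fun _ _ => isClosed_bowenBall hT)
  rw [← hcard]
  exact sepMaxCard_le_card_of_cover (fun _ _ => bowenDiamLE_bowenBall) fun x hx => by
    simpa only [mem_iUnion₂, exists_prop] using hclosure hx

lemma BowenDiamLE.sepMaxCard_add_le (hA : BowenDiamLE T m ε A) (hε : 0 ≤ ε) :
    sepMaxCard T (m + n) ε A ≤ sepMaxCard T n ε univ := by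
  classical
  refine sepMaxCard_le_iff.2 fun E hEA hE => ?_
  have hsep {x y : X} (hx : x ∈ E) (hy : y ∈ E) (hxy : x ≠ y) :
      ∃ i < n, ε < dist (T^[i] (T^[m] x)) (T^[i] (T^[m] y)) := by
    obtain ⟨i, hi, hlt⟩ := hE hx hy hxy
    obtain ⟨i, rfl⟩ : ∃ j, i = j + m :=
      Nat.exists_eq_add_of_le' <| not_lt.1 fun him => hlt.not_ge (hA x (hEA hx) y (hEA hy) i him)
    exact ⟨i, by lia, by simpa only [← Function.iterate_add_apply] using hlt⟩
  have hinj : InjOn T^[m] ↑E := fun x hx y hy hxy => by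
    by_contra hne
    obtain ⟨i, -, hlt⟩ := hsep hx hy hne
    rw [hxy, dist_self] at hlt
    exact hlt.not_ge hε
  rw [← Finset.card_image_of_injOn hinj]
  refine card_le_sepMaxCard (subset_univ _) ?_
  rw [Finset.coe_image]
  rintro _ ⟨x, hx, rfl⟩ _ ⟨y, hy, rfl⟩ hne
  exact hsep hx hy (ne_of_apply_ne _ hne)

end BowenBall

section TopologicalEntropy

lemma log_div_natCast_le_iff {c : ℝ≥0∞} {n : ℕ} (hn : 0 < n) (b : ℝ) :
    ENNReal.log c / (n : EReal) ≤ (b : EReal) ↔ c ≤ ENNReal.ofReal (Real.exp (b * n)) := by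
  have hmul : (n : EReal) * (b : EReal) = ((b * n : ℝ) : EReal) := by
    rw [EReal.coe_mul, mul_comm, EReal.coe_natCast]
  rw [EReal.div_le_iff_le_mul (mod_cast hn) (EReal.natCast_ne_top n), ← ENNReal.log_le_log_iff,
    ENNReal.log_ofReal_of_pos (Real.exp_pos _), Real.log_exp, hmul]

variable [PseudoMetricSpace X] {T : X → X} {K L : Set X} {h : ℝ} {x : X}

lemma sepEnt_mono {ε δ : ℝ} (hcard : ∀ n, sepMaxCard T n ε K ≤ sepMaxCard T n δ L) :
    sepEnt T ε K ≤ sepEnt T δ L :=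
  limsup_le_limsup (.of_forall fun n =>
    EReal.div_le_div_right_of_nonneg (Nat.cast_nonneg' n) (ENNReal.log_monotone (hcard n)))

lemma subEnt_mono (hKL : K ⊆ L) : subEnt T K ≤ subEnt T L :=
  iSup₂_mono fun _ _ => sepEnt_mono fun _ => sepMaxCard_mono hKL le_rfl

lemma subEnt_closure_le (hT : Continuous T) : subEnt T (closure K) ≤ subEnt T K :=
  iSup₂_le fun ε hε => le_iSup₂_of_le (ε / 2) (half_pos hε) <|
    sepEnt_mono fun _ => sepMaxCard_closure_le hT hε.le

lemma subEnt_empty : subEnt T ∅ = ⊥ := by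
  refine le_bot_iff.1 <| iSup₂_le fun ε _ => limsup_le_of_le (by isBoundedDefault) ?_
  filter_upwards [eventually_gt_atTop 0] with n hn
  rw [sepMaxCard_empty, ENNReal.log_zero, EReal.bot_div_of_pos_ne_top (mod_cast hn)
    (EReal.natCast_ne_top n)]

lemma subEnt_nonneg (hK : K.Nonempty) : 0 ≤ subEnt T K :=
  le_iSup₂_of_le 1 one_pos <| le_limsup_of_frequently_le
    (Frequently.of_forall fun _ => EReal.div_nonneg (by
      rw [← ENNReal.log_one]
      exact ENNReal.log_monotone (one_le_sepMaxCard hK)) (Nat.cast_nonneg' _)) (by isBoundedDefault)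

lemma subEnt_le_iff : subEnt T K ≤ (h : EReal) ↔ ∀ ε > 0, ∀ δ > 0, ∀ᶠ n : ℕ in atTop,
    sepMaxCard T n ε K ≤ ENNReal.ofReal (Real.exp ((h + δ) * n)) := by
  refine ⟨fun hK ε hε δ hδ => ?_, fun hK => iSup₂_le fun ε hε => ?_⟩
  · have hlt : sepEnt T ε K < ((h + δ : ℝ) : EReal) :=
      ((le_iSup₂_of_le ε hε le_rfl).trans hK).trans_lt (mod_cast lt_add_of_pos_right h hδ)
    filter_upwards [eventually_lt_of_limsup_lt hlt (by isBoundedDefault), eventually_gt_atTop 0]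
      with n hn hn0
    exact (log_div_natCast_le_iff hn0 _).1 hn.le
  · refine EReal.le_of_forall_lt_iff_le.1 fun z hz => limsup_le_of_le (by isBoundedDefault) ?_
    filter_upwards [hK ε hε (z - h) (sub_pos.2 (mod_cast hz)), eventually_gt_atTop 0] with n hn hn0
    rw [log_div_natCast_le_iff hn0]
    rwa [add_sub_cancel] at hn

lemma subEnt_le_of_tendsto_zero {u : ℕ → ℝ} (hu : Tendsto u atTop (𝓝 0))
    (hK : ∀ k, ∀ᶠ n : ℕ in atTop,
      sepMaxCard T n (u k) K ≤ ENNReal.ofReal (Real.exp ((h + u k) * n))) :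
    subEnt T K ≤ (h : EReal) := by
  refine subEnt_le_iff.2 fun ε hε δ hδ => ?_
  obtain ⟨k, hk⟩ := (hu.eventually (gt_mem_nhds (lt_min hε hδ))).exists
  filter_upwards [hK k] with n hn
  have huδ : u k ≤ δ := (hk.trans_le (min_le_right _ _)).le
  exact (sepMaxCard_mono subset_rfl (hk.trans_le (min_le_left _ _)).le).trans (hn.trans (by gcongr))

lemma exists_frequently_lt_sepMaxCard (hK : (h : EReal) < subEnt T K) :
    ∃ ε > 0, ∃ᶠ n : ℕ in atTop, ENNReal.ofReal (Real.exp (h * n)) < sepMaxCard T n ε K := by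
  obtain ⟨ε, hε, hlt⟩ := by simpa only [subEnt, lt_iSup_iff] using hK
  refine ⟨ε, hε, ((frequently_lt_of_lt_limsup (by isBoundedDefault) hlt).and_eventually
    (eventually_gt_atTop 0)).mono fun n ⟨hn, hn0⟩ => ?_⟩
  exact lt_of_not_ge fun hle => hn.not_ge ((log_div_natCast_le_iff hn0 h).2 hle)

lemma subEnt_singleton : subEnt T {x} = 0 := by
  refine le_antisymm (subEnt_le_iff.2 fun ε hε δ hδ => .of_forall fun n => ?_)
    (subEnt_nonneg (singleton_nonempty x))
  refine (sepMaxCard_le_one fun y hy z hz i _ => ?_).trans ?_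
  · rw [mem_singleton_iff.1 hy, mem_singleton_iff.1 hz, dist_self]
    exact hε.le
  · rw [ENNReal.one_le_ofReal]
    exact Real.one_le_exp (by positivity)

end TopologicalEntropy

section DimensionalEntropy

variable {ι : Type*} {T : X → X} {U : Finset (Set X)} {E K L : Set X} {lam mu : ℝ}
  {k n : ℕ} {N : ℕ∞}

lemma refines_dynCov (hE : ∀ i < k, Refines (T^[i] '' E) U) : Refines E (dynCov T U k) := by
  classical
  induction k with
  | zero => exact ⟨univ, by simp [dynCov], subset_univ _⟩
  | succ k ih =>
    obtain ⟨A, hA, hEA⟩ := ih fun i hi => hE i (by lia)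
    obtain ⟨B, hB, hEB⟩ := hE k k.lt_succ_self
    refine ⟨A ∩ T^[k] ⁻¹' B, ?_, subset_inter hEA (image_subset_iff.1 hEB)⟩
    simp only [dynCov, covJoin, Finset.mem_image, Finset.mem_product]
    exact ⟨(A, T^[k] ⁻¹' B), ⟨hA, B, hB, rfl⟩, rfl⟩

lemma natCast_le_nTU_iff : (n : ℕ∞) ≤ nTU T U E ↔ ∀ i < n, Refines (T^[i] '' E) U := by
  refine ⟨fun hn i hi => ?_, fun hE => le_iSup₂_of_le n hE le_rfl⟩
  have hlt : (i : ℕ∞) < nTU T U E := (Nat.cast_lt.2 hi).trans_le hn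
  obtain ⟨j, hE, hij⟩ := by simpa only [nTU, lt_iSup_iff] using hlt
  exact hE i (Nat.cast_lt.1 hij)

lemma expWeight_natCast : expWeight lam n = ENNReal.ofReal (Real.exp (-(lam * n))) := by
  simp [expWeight]

lemma expWeight_top_of_pos (hlam : 0 < lam) : expWeight lam ⊤ = 0 := by
  simp [expWeight, hlam]

lemma expWeight_top_of_neg (hlam : lam < 0) : expWeight lam ⊤ = ⊤ := by
  simp [expWeight, hlam.not_gt, hlam.ne]

lemma one_le_expWeight (hlam : lam ≤ 0) : 1 ≤ expWeight lam N := by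
  induction N using ENat.recTopCoe with
  | top =>
    rcases hlam.lt_or_eq with hneg | rfl
    · simp [expWeight_top_of_neg hneg]
    · simp [expWeight]
  | coe n =>
    rw [expWeight_natCast, ENNReal.one_le_ofReal]
    exact Real.one_le_exp (neg_nonneg.2 (mul_nonpos_of_nonpos_of_nonneg hlam n.cast_nonneg))

lemma expWeight_le_of_natCast_le (hlam : 0 < lam) (hn : (n : ℕ∞) ≤ N) :
    expWeight lam N ≤ ENNReal.ofReal (Real.exp (-(lam * n))) := by
  induction N using ENat.recTopCoe with
  | top => simp [expWeight_top_of_pos hlam]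
  | coe m =>
    rw [expWeight_natCast]
    have hnm : (n : ℝ) ≤ m := mod_cast hn
    gcongr

lemma expWeight_antitone : Antitone fun lam => expWeight lam N := by
  intro lam mu hle
  induction N using ENat.recTopCoe with
  | top =>
    rcases lt_or_ge 0 mu with hmu | hmu
    · simp [expWeight_top_of_pos hmu]
    rcases hle.eq_or_lt with rfl | hlt
    · rfl
    · simp [expWeight_top_of_neg (hlt.trans_le hmu)]
  | coe n =>
    simp only [expWeight_natCast]
    gcongr

lemma mTU_le {ℰ : Set (Set X)} (hcount : ℰ.Countable) (hK : K ⊆ ⋃₀ ℰ)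
    (hℰ : ∀ E ∈ ℰ, Refines E (dynCov T U k)) :
    mTU T U K lam k ≤ ∑' E : ℰ, expWeight lam (nTU T U E) :=
  iInf₂_le ℰ ⟨hcount, hK, hℰ⟩

lemma mTU_mono (hKL : K ⊆ L) (hle : lam ≤ mu) : mTU T U K mu k ≤ mTU T U L lam k :=
  le_iInf₂ fun _ ⟨hcount, hL, hℰ⟩ => (mTU_le hcount (hKL.trans hL) hℰ).trans <|
    ENNReal.tsum_le_tsum fun _ => expWeight_antitone hle

lemma mTU_empty : mTU T U ∅ lam k = 0 :=
  ((mTU_le countable_empty (empty_subset _) fun _ => False.elim).trans (by simp)).antisymm zero_le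

lemma mTU_union_le : mTU T U (K ∪ L) lam k ≤ mTU T U K lam k + mTU T U L lam k := by
  simp only [mTU, ENNReal.iInf₂_add, ENNReal.add_iInf₂]
  refine le_iInf₂ fun ℱ ⟨hcount', hL, hℱ⟩ => le_iInf₂ fun ℰ ⟨hcount, hK, hℰ⟩ => ?_
  have hcover : K ∪ L ⊆ ⋃₀ (ℰ ∪ ℱ) := by
    rw [sUnion_union]
    exact union_subset_union hK hL
  exact (mTU_le (hcount.union hcount') hcover fun E => Or.rec (hℰ E) (hℱ E)).trans
    (ENNReal.tsum_union_le (fun E => expWeight lam (nTU T U E)) ℰ ℱ)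

lemma mTUlim_eq_zero_iff : mTUlim T U K lam = 0 ↔ ∀ k, mTU T U K lam k = 0 := by
  simp only [mTUlim, ENNReal.iSup_eq_zero]

lemma mTUlim_biUnion_eq_zero {S : Finset ι} {B : ι → Set X}
    (hB : ∀ i ∈ S, mTUlim T U (B i) lam = 0) : mTUlim T U (⋃ i ∈ S, B i) lam = 0 := by
  classical
  simp only [mTUlim_eq_zero_iff] at hB ⊢
  intro k
  induction S using Finset.induction_on with
  | empty => simpa using mTU_empty
  | insert a S _ ih =>
    rw [Finset.set_biUnion_insert, ← nonpos_iff_eq_zero]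
    refine mTU_union_le.trans_eq ?_
    rw [hB a (Finset.mem_insert_self a S) k, ih fun i hi => hB i (Finset.mem_insert_of_mem hi),
      add_zero]

lemma hBU_le_of_mTUlim_eq_zero (hK : mTUlim T U K lam = 0) : hBU T U K ≤ lam := iInf₂_le lam hK

lemma mTUlim_eq_zero_of_hBU_lt (hK : hBU T U K < mu) : mTUlim T U K mu = 0 := by
  obtain ⟨lam, hzero, hlt⟩ := by simpa only [hBU, iInf_lt_iff] using hK
  simp only [mTUlim_eq_zero_iff] at hzero ⊢
  exact fun k => le_antisymm ((mTU_mono subset_rfl (mod_cast hlt.le)).trans_eq (hzero k)) zero_le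

lemma hBU_mono (hKL : K ⊆ L) : hBU T U K ≤ hBU T U L :=
  le_iInf₂ fun _ hL => hBU_le_of_mTUlim_eq_zero <| mTUlim_eq_zero_iff.2 fun k =>
    le_antisymm ((mTU_mono hKL le_rfl).trans_eq (mTUlim_eq_zero_iff.1 hL k)) zero_le

lemma hBU_empty : hBU T U ∅ = ⊥ :=
  EReal.eq_bot_iff_forall_lt _ |>.2 fun lam =>
    (hBU_le_of_mTUlim_eq_zero (mTUlim_eq_zero_iff.2 fun _ => mTU_empty)).trans_lt
      (mod_cast sub_one_lt lam)

lemma hBU_biUnion_le {S : Finset ι} {B : ι → Set X} :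
    hBU T U (⋃ i ∈ S, B i) ≤ S.sup fun i => hBU T U (B i) :=
  EReal.le_of_forall_lt_iff_le.1 fun _ hz => hBU_le_of_mTUlim_eq_zero <|
    mTUlim_biUnion_eq_zero fun _ hi => mTUlim_eq_zero_of_hBU_lt ((Finset.le_sup hi).trans_lt hz)

lemma hBU_nonneg (hK : K.Nonempty) : 0 ≤ hBU T U K := by
  refine le_iInf₂ fun lam hzero => ?_
  by_contra! hlam
  obtain ⟨x, hx⟩ := hK
  have hone : 1 ≤ mTU T U K lam 0 := le_iInf₂ fun ℰ ⟨_, hcover, _⟩ => by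
    obtain ⟨E, hE, -⟩ := hcover hx
    exact (one_le_expWeight (mod_cast hlam.le)).trans (ENNReal.le_tsum (⟨E, hE⟩ : ℰ))
  exact one_ne_zero (le_antisymm (hone.trans_eq (mTUlim_eq_zero_iff.1 hzero 0)) zero_le)

lemma hB_mono [TopologicalSpace X] (hKL : K ⊆ L) : hB T K ≤ hB T L :=
  iSup₂_mono fun _ _ => hBU_mono hKL

lemma hB_empty [TopologicalSpace X] : hB T ∅ = ⊥ := by
  simp only [hB, hBU_empty, iSup_bot]

lemma hB_nonneg [TopologicalSpace X] (hK : K.Nonempty) : 0 ≤ hB T K :=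
  le_iSup₂_of_le {univ} (by simp) (hBU_nonneg hK)

lemma hB_biUnion_le [TopologicalSpace X] {S : Finset ι} {B : ι → Set X} :
    hB T (⋃ i ∈ S, B i) ≤ S.sup fun i => hB T (B i) :=
  iSup₂_le fun U hU => hBU_biUnion_le.trans <| Finset.sup_mono_fun fun _ _ =>
    le_iSup₂_of_le U hU le_rfl

end DimensionalEntropy

section Comparison

variable [PseudoMetricSpace X] {T : X → X} {U : Finset (Set X)} {K : Set X}

lemma mTU_le_sepMaxCard_mul {ε lam : ℝ} {k n : ℕ} (hε : 0 < ε) (hlam : 0 < lam)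
    (hU : ∀ x, ∃ A ∈ U, ball x ε ⊆ A) (hkn : k ≤ n) (hK : sepMaxCard T n (ε / 2) K < ⊤) :
    mTU T U K lam k ≤ sepMaxCard T n (ε / 2) K * ENNReal.ofReal (Real.exp (-(lam * n))) := by
  classical
  obtain ⟨S, hSK, hS, hcard⟩ := exists_isSep_card_eq hK
  let balls : Finset (Set X) := S.image (bowenBall T n (ε / 2))
  have hrefines (y : X) : ∀ i < n, Refines (T^[i] '' bowenBall T n (ε / 2) y) U := fun i hi => by
    obtain ⟨A, hA, hball⟩ := hU (T^[i] y)
    exact ⟨A, hA, image_subset_iff.2 fun x hx =>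
      hball ((hx i hi).trans_lt (half_lt_self hε))⟩
  have hballs : ∀ E ∈ balls, ∀ i < n, Refines (T^[i] '' E) U :=
    Finset.forall_mem_image.2 fun y _ => hrefines y
  have hcover : K ⊆ ⋃₀ (balls : Set (Set X)) := fun x hx => by
    obtain ⟨y, hy, hxy⟩ := hS.exists_mem_bowenBall hSK (by positivity) hcard.ge hx
    exact ⟨_, Finset.mem_image_of_mem _ hy, hxy⟩
  calc mTU T U K lam k
      ≤ ∑' E : (balls : Set (Set X)), expWeight lam (nTU T U E) :=
        mTU_le balls.countable_toSet hcover fun E hE =>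
          refines_dynCov fun i hi => hballs E hE i (hi.trans_le hkn)
    _ = ∑ E ∈ balls, expWeight lam (nTU T U E) :=
        Finset.tsum_subtype' balls fun E => expWeight lam (nTU T U E)
    _ ≤ balls.card • ENNReal.ofReal (Real.exp (-(lam * n))) :=
        Finset.sum_le_card_nsmul _ _ _ fun E hE =>
          expWeight_le_of_natCast_le hlam (natCast_le_nTU_iff.2 (hballs E hE))
    _ ≤ sepMaxCard T n (ε / 2) K * ENNReal.ofReal (Real.exp (-(lam * n))) := by
        rw [nsmul_eq_mul, ← hcard]
        gcongr
        exact Finset.card_image_le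

lemma tendsto_ofReal_exp_mul_atTop_zero {a : ℝ} (ha : a < 0) :
    Tendsto (fun n : ℕ => ENNReal.ofReal (Real.exp (a * n))) atTop (𝓝 0) := by
  rw [← ENNReal.ofReal_zero]
  exact ENNReal.tendsto_ofReal <| Real.tendsto_exp_atBot.comp <|
    tendsto_natCast_atTop_atTop.const_mul_atTop_of_neg ha

lemma hB_le_subEnt [CompactSpace X] (hT : Continuous T) : hB T K ≤ subEnt T K := by
  rcases K.eq_empty_or_nonempty with rfl | hK
  · exact hB_empty.trans_le bot_le
  refine iSup₂_le fun U ⟨hUopen, hUcover⟩ => EReal.le_of_forall_lt_iff_le.1 fun z hz =>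
    hBU_le_of_mTUlim_eq_zero <| mTUlim_eq_zero_iff.2 fun k => ?_
  obtain ⟨ε, hε, hU⟩ := lebesgue_number_lemma_of_metric_sUnion isCompact_univ hUopen hUcover.ge
  obtain ⟨w, hKw, hwz⟩ := EReal.lt_iff_exists_real_btwn.1 hz
  have hw : 0 ≤ w := mod_cast (subEnt_nonneg hK).trans hKw.le
  have hwz : w < z := mod_cast hwz
  refine le_antisymm (ge_of_tendsto
    (tendsto_ofReal_exp_mul_atTop_zero (a := (w - z) / 2) (by linarith)) ?_) zero_le
  filter_upwards [subEnt_le_iff.1 hKw.le (ε / 2) (by positivity) ((z - w) / 2) (by linarith),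
    eventually_ge_atTop k] with n hn hkn
  calc mTU T U K z k
      ≤ sepMaxCard T n (ε / 2) K * ENNReal.ofReal (Real.exp (-(z * n))) :=
        mTU_le_sepMaxCard_mul hε (by linarith) (fun x => hU x (mem_univ x)) hkn
          (sepMaxCard_lt_top hT (by positivity))
    _ ≤ ENNReal.ofReal (Real.exp ((w + (z - w) / 2) * n)) *
          ENNReal.ofReal (Real.exp (-(z * n))) := by gcongr
    _ = ENNReal.ofReal (Real.exp ((w - z) / 2 * n)) := by
        rw [← ENNReal.ofReal_mul (Real.exp_nonneg _), ← Real.exp_add]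
        ring_nf

end Comparison

section Content

open scoped NNReal

/-- A finitely additive, finite measure defined on all subsets of `X`. -/
abbrev TotalContent (X : Type*) := AddContent ℝ≥0 (univ : Set (Set X))

lemma isSetRing_univ : IsSetRing (univ : Set (Set X)) :=
  ⟨mem_univ _, fun _ _ _ _ => mem_univ _, fun _ _ _ _ => mem_univ _⟩

namespace TotalContent

lemma mono (ν : TotalContent X) {A B : Set X} (hAB : A ⊆ B) : ν A ≤ ν B :=
  addContent_mono isSetRing_univ.isSetSemiring (mem_univ A) (mem_univ B) hAB

/-- The push-forward under `f` of the restriction of `ν` to `A`. -/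
def mapRestrict (ν : TotalContent X) (A : Set X) (f : X → Y) : TotalContent Y :=
  isSetRing_univ.addContent_of_union (fun B => ν (A ∩ f ⁻¹' B)) (by simp) fun _ _ hdisj => by
    rw [preimage_union, inter_union_distrib_left]
    exact addContent_union isSetRing_univ (mem_univ _) (mem_univ _)
      ((hdisj.preimage f).mono inter_subset_right inter_subset_right)

lemma mapRestrict_apply (ν : TotalContent X) (A : Set X) (f : X → Y) (B : Set Y) :
    ν.mapRestrict A f B = ν (A ∩ f ⁻¹' B) := rfl

open scoped Classical in
/-- The uniform probability content on a finite set (identically `0` on the empty set). -/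
def uniform (S : Finset X) : TotalContent X :=
  isSetRing_univ.addContent_of_union (fun A => (S.filter (· ∈ A)).card / S.card) (by simp)
    fun _ _ hdisj => by
      simp only [mem_union]
      rw [Finset.filter_or, Finset.card_union_of_disjoint, Nat.cast_add, add_div]
      exact Finset.disjoint_filter.2 fun x _ hxA hxB => disjoint_left.1 hdisj hxA hxB

open scoped Classical in
lemma uniform_apply (S : Finset X) (A : Set X) :
    uniform S A = ((S.filter (· ∈ A)).card : ℝ≥0) / S.card := rfl

lemma uniform_univ {S : Finset X} (hS : S.Nonempty) : uniform S univ = 1 := by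
  simp [uniform_apply, hS.ne_empty]

lemma exists_tendsto_ultrafilter {ι : Type*} (F : Ultrafilter ι) (ν : ι → TotalContent X)
    (hν : ∀ i, ν i univ = 1) :
    ∃ ν' : TotalContent X, ∀ A, Tendsto (fun i => ν i A) F (𝓝 (ν' A)) := by
  have hmem (A : Set X) : (F.map fun i => ν i A : Filter ℝ≥0) ≤ 𝓟 (Icc 0 1) :=
    tendsto_principal.2 <| .of_forall fun i => ⟨zero_le, hν i ▸ (ν i).mono (subset_univ A)⟩
  have hlim (A : Set X) : ∃ c, Tendsto (fun i => ν i A) F (𝓝 c) :=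
    (isCompact_Icc.ultrafilter_le_nhds _ (hmem A)).imp fun _ hc => hc.2
  choose m hm using hlim
  refine ⟨isSetRing_univ.addContent_of_union m ?_ fun {A B} _ _ hdisj => ?_, hm⟩
  · exact tendsto_nhds_unique (hm ∅) (by simp)
  · refine tendsto_nhds_unique (hm (A ∪ B)) (((hm A).add (hm B)).congr fun i => ?_)
    exact (addContent_union isSetRing_univ (mem_univ A) (mem_univ B) hdisj).symm

end TotalContent

lemma exists_forall_le_apply_ge {a : ℕ → ℝ} (ha : ∀ b, ∃ n, b < a n) (M : ℕ) :
    ∃ n ≥ M, ∀ j ≤ n, a j ≤ a n := by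
  obtain ⟨b, -, hb⟩ := (Finset.range (M + 1)).exists_max_image a ⟨0, by simp⟩
  obtain ⟨n, hn⟩ := ha (a b)
  obtain ⟨c, hcn, hc⟩ := (Finset.range (n + 1)).exists_max_image a ⟨0, by simp⟩
  simp only [Finset.mem_range, Nat.lt_succ_iff] at hb hc hcn
  refine ⟨c, ?_, fun j hj => hc j (hj.trans hcn)⟩
  by_contra! hcM
  exact (hn.trans_le (hc n le_rfl)).not_ge (hb c hcM.le)

section EntropyContent

variable [PseudoMetricSpace X] [CompactSpace X] {T : X → X} {l ε : ℝ}

lemma exists_lt_toReal_sepMaxCard_mul_exp {K : Set X} {b : ℝ} (hT : Continuous T) (hε : 0 < ε)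
    (hlb : l < b) (hK : ∃ᶠ n : ℕ in atTop, ENNReal.ofReal (Real.exp (b * n)) < sepMaxCard T n ε K)
    (B : ℝ) : ∃ n : ℕ, B < (sepMaxCard T n ε K).toReal * Real.exp (-(l * n)) := by
  have htend : Tendsto (fun n : ℕ => Real.exp ((b - l) * n)) atTop atTop :=
    Real.tendsto_exp_atTop.comp (tendsto_natCast_atTop_atTop.const_mul_atTop (sub_pos.2 hlb))
  obtain ⟨n, hn, hB⟩ := (hK.and_eventually (htend.eventually_gt_atTop B)).exists
  have hn : Real.exp (b * n) < (sepMaxCard T n ε K).toReal :=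
    (ENNReal.ofReal_lt_iff_lt_toReal (Real.exp_nonneg _) (sepMaxCard_lt_top hT hε).ne).1 hn
  refine ⟨n, hB.trans ?_⟩
  calc Real.exp ((b - l) * n) = Real.exp (b * n) * Real.exp (-(l * n)) := by
        rw [← Real.exp_add]
        ring_nf
    _ < (sepMaxCard T n ε K).toReal * Real.exp (-(l * n)) := by gcongr

lemma uniform_le_exp_of_record {n j : ℕ} {S : Finset X} {A : Set X} (hT : Continuous T)
    (hε : 0 < ε) (hS : IsSep T n ε ↑S) (hne : S.Nonempty)
    (hcard : (S.card : ℝ≥0∞) = sepMaxCard T n ε univ)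
    (hrecord : ∀ i ≤ n, (sepMaxCard T i ε univ).toReal * Real.exp (-(l * i)) ≤
      (sepMaxCard T n ε univ).toReal * Real.exp (-(l * n)))
    (hjn : j ≤ n) (hA : BowenDiamLE T j ε A) :
    (TotalContent.uniform S A : ℝ) ≤ Real.exp (-(l * j)) := by
  classical
  obtain ⟨i, rfl⟩ := Nat.exists_eq_add_of_le hjn
  have hfilter : ((S.filter (· ∈ A)).card : ℝ) ≤ (sepMaxCard T i ε univ).toReal := by
    rw [← ENNReal.toReal_natCast]
    refine ENNReal.toReal_mono (sepMaxCard_lt_top hT hε).ne ?_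
    refine (card_le_sepMaxCard (fun x hx => (Finset.mem_filter.1 hx).2) ?_).trans
      (hA.sepMaxCard_add_le hε.le)
    exact hS.mono (Finset.coe_subset.2 (S.filter_subset _))
  have hpos : (0 : ℝ) < S.card := mod_cast hne.card_pos
  rw [TotalContent.uniform_apply]
  push_cast
  rw [div_le_iff₀ hpos]
  have hrec := hrecord i (Nat.le_add_left i j)
  rw [← hcard, ENNReal.toReal_natCast] at hrec
  calc ((S.filter (· ∈ A)).card : ℝ)
      ≤ (sepMaxCard T i ε univ).toReal * Real.exp (-(l * i)) * Real.exp (l * i) := by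
        rwa [mul_assoc, ← Real.exp_add, neg_add_cancel, Real.exp_zero, mul_one]
    _ ≤ S.card * Real.exp (-(l * (j + i : ℕ))) * Real.exp (l * i) := by gcongr
    _ = Real.exp (-(l * j)) * S.card := by
        rw [mul_assoc, ← Real.exp_add, mul_comm]
        push_cast
        ring_nf

lemma exists_totalContent_le_exp (hT : Continuous T) (hl : (l : EReal) < subEnt T univ) :
    ∃ ε > 0, ∃ ν : TotalContent X, ν univ = 1 ∧
      ∀ (j : ℕ) (A : Set X), BowenDiamLE T j ε A → (ν A : ℝ) ≤ Real.exp (-(l * j)) := by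
  obtain ⟨b, hlb, hb⟩ := EReal.lt_iff_exists_real_btwn.1 hl
  obtain ⟨ε, hε, hfreq⟩ := exists_frequently_lt_sepMaxCard hb
  choose r hr hrecord using exists_forall_le_apply_ge
    (exists_lt_toReal_sepMaxCard_mul_exp hT hε (mod_cast hlb) hfreq)
  choose S _ hS hcard using fun M =>
    exists_isSep_card_eq (sepMaxCard_lt_top (n := r M) (K := univ) hT hε)
  have hX : (univ : Set X).Nonempty := by
    by_contra! hempty
    rw [hempty, subEnt_empty] at hb
    exact not_lt_bot hb
  have hne (M : ℕ) : (S M).Nonempty := by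
    have hone := one_le_sepMaxCard (T := T) (n := r M) (ε := ε) hX
    rw [← hcard M] at hone
    exact Finset.card_pos.1 (mod_cast hone)
  obtain ⟨ν, hν⟩ := TotalContent.exists_tendsto_ultrafilter (hyperfilter ℕ)
    (fun M => .uniform (S M)) fun M => TotalContent.uniform_univ (hne M)
  refine ⟨ε, hε, ν, tendsto_nhds_unique (hν univ) ?_, fun j A hA => ?_⟩
  · simp only [TotalContent.uniform_univ (hne _), tendsto_const_nhds]
  · refine le_of_tendsto (NNReal.tendsto_coe.2 (hν A)) ?_
    filter_upwards [Nat.hyperfilter_le_atTop (eventually_ge_atTop j)] with M hM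
    exact uniform_le_exp_of_record hT hε (hS M) (hne M) (hcard M) (hrecord M) (hM.trans (hr M)) hA

end EntropyContent

end Content

section NearPartition

variable [PseudoMetricSpace X] {ι : Type*} {ε δ r R : ℝ}

/-- The sets `Q i` are closed, of diameter at most `ε`, and at mutual distance at least `r`. -/
structure IsSeparatedFamily (ε r : ℝ) (Q : ι → Set X) : Prop where
  isClosed (i : ι) : IsClosed (Q i)
  dist_le (i : ι) ⦃x y : X⦄ (hx : x ∈ Q i) (hy : y ∈ Q i) : dist x y ≤ ε
  eq_of_dist_lt ⦃i j : ι⦄ ⦃x y : X⦄ (hx : x ∈ Q i) (hy : y ∈ Q j) (hxy : dist x y < r) : i = j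

/-- The points within `R - r` of the centre `c i` which are at distance at least `R + r` from every
earlier centre. -/
def shellCell [LT ι] (c : ι → X) (R r : ℝ) (i : ι) : Set X :=
  {x | dist x (c i) ≤ R - r ∧ ∀ l < i, R + r ≤ dist x (c l)}

/-- The open shell of radius `R` and half-width `r` around `c`. -/
def shell (c : X) (R r : ℝ) : Set X := {x | |dist x c - R| < r}

lemma isSeparatedFamily_shellCell [LinearOrder ι] (c : ι → X) (hR : 2 * (R - r) ≤ ε) :
    IsSeparatedFamily ε (2 * r) (shellCell c R r) where
  isClosed i := by
    simp only [shellCell, ofPred_and, ofPred_forall]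
    exact (isClosed_le (by fun_prop) (by fun_prop)).inter <| isClosed_iInter fun l =>
      isClosed_iInter fun _ => isClosed_le (by fun_prop) (by fun_prop)
  dist_le i x y hx hy := by linarith [dist_triangle_right x y (c i), hx.1, hy.1]
  eq_of_dist_lt i j x y hx hy hxy := by
    rcases lt_trichotomy i j with hij | rfl | hji
    · linarith [hy.2 i hij, dist_triangle_left y (c i) x, hx.1]
    · rfl
    · linarith [hx.2 j hji, dist_triangle x y (c j), hy.1]

lemma mem_shellCell_or_mem_shell [LinearOrder ι] [WellFoundedLT ι] {c : ι → X} {x : X}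
    (hx : ∃ i, dist x (c i) ≤ R - r) : (∃ i, x ∈ shellCell c R r i) ∨ ∃ i, x ∈ shell (c i) R r := by
  refine or_iff_not_imp_right.2 fun hshell => ?_
  obtain ⟨i, hi, hmin⟩ := exists_minimal_of_wellFoundedLT (fun i => dist x (c i) ≤ R - r) hx
  refine ⟨i, hi, fun l hl => ?_⟩
  have hfar : R - r < dist x (c l) := not_le.1 fun hle => (hmin hle hl.le).not_gt hl
  by_contra! hlt
  have hl : |dist x (c l) - R| < r := abs_lt.2 ⟨by linarith, by linarith⟩
  exact hshell ⟨l, hl⟩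

lemma disjoint_shell {c : X} {R' : ℝ} (hR : R + 2 * r ≤ R') :
    Disjoint (shell c R r) (shell c R' r) :=
  disjoint_left.2 fun x (hx : |_| < r) (hx' : |_| < r) => by
    linarith [(abs_lt.1 hx).2, (abs_lt.1 hx').1]

lemma TotalContent.univ_le_sum_shellCell_add_sum_shell [LinearOrder ι] [Fintype ι]
    (ν : TotalContent X) {c : ι → X} (hc : ∀ x, ∃ i, dist x (c i) ≤ R - r) :
    ν univ ≤ ∑ i, ν (shellCell c R r i) + ∑ i, ν (shell (c i) R r) := by
  have hcover : (univ : Set X) ⊆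
      (⋃ i ∈ Finset.univ, shellCell c R r i) ∪ ⋃ i ∈ Finset.univ, shell (c i) R r := fun x _ => by
    simpa only [mem_union, mem_iUnion, Finset.mem_univ, exists_prop, true_and] using
      mem_shellCell_or_mem_shell (hc x)
  refine (ν.mono hcover).trans <|
    (addContent_union_le isSetRing_univ (mem_univ _) (mem_univ _)).trans (add_le_add ?_ ?_) <;>
  exact addContent_biUnion_le isSetRing_univ fun _ _ => mem_univ _

lemma TotalContent.sum_shell_le (ν : TotalContent X) (hr : 0 ≤ r) (c : X) (k : ℕ) :
    ∑ i ∈ Finset.range k, ν (shell c (R + (2 * i + 1) * r) r) ≤ ν univ := by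
  have hdisj : Pairwise (Function.onFun Disjoint fun i : ℕ => shell c (R + (2 * i + 1) * r) r) :=
    (pairwise_disjoint_on _).2 fun i j hij => disjoint_shell <| by
      have hij : (i : ℝ) + 1 ≤ j := mod_cast hij
      nlinarith
  rw [← addContent_biUnion_eq isSetRing_univ (fun _ _ => mem_univ _) (hdisj.set_pairwise _)]
  exact ν.mono (subset_univ _)

-- Of the `k` families of shells with pairwise disjoint radii, one has average content.
lemma TotalContent.exists_isSeparatedFamily_shellCell [LinearOrder ι] [Fintype ι]
    (ν : TotalContent X) {c : ι → X} {η : ℝ} {k : ℕ} (hr : 0 ≤ r)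
    (hc : ∀ x, ∃ i, dist x (c i) ≤ δ) (hδ : 2 * (δ + 2 * k * r) ≤ ε) (hk : k ≠ 0)
    (hη : Fintype.card ι ≤ k * η) :
    ∃ Q : ι → Set X, IsSeparatedFamily ε (2 * r) Q ∧ (1 - η) * ν univ ≤ ∑ i, (ν (Q i) : ℝ) := by
  let radius (j : ℕ) : ℝ := δ + (2 * j + 1) * r
  have htotal : ∑ j ∈ Finset.range k, ∑ i, (ν (shell (c i) (radius j) r) : ℝ) ≤
      ∑ _j ∈ Finset.range k, η * ν univ := by
    rw [Finset.sum_comm]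
    calc ∑ i, ∑ j ∈ Finset.range k, (ν (shell (c i) (radius j) r) : ℝ)
        ≤ ∑ _i : ι, (ν univ : ℝ) :=
          Finset.sum_le_sum fun i _ => by
            simpa only [NNReal.coe_sum] using NNReal.coe_le_coe.2 (ν.sum_shell_le hr (c i) k)
      _ = Fintype.card ι * ν univ := by simp
      _ ≤ k * η * ν univ := by gcongr
      _ = ∑ _j ∈ Finset.range k, η * ν univ := by simp [mul_assoc]
  obtain ⟨j, hjk, hj⟩ := Finset.exists_le_of_sum_le (Finset.nonempty_range_iff.2 hk) htotal
  have hj0 : 0 ≤ (j : ℝ) * r := by positivity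
  have hjk : (j : ℝ) + 1 ≤ k := mod_cast Finset.mem_range.1 hjk
  refine ⟨shellCell c (radius j) r, isSeparatedFamily_shellCell c ?_, ?_⟩
  · simp only [radius]
    nlinarith
  · have hsum : (ν univ : ℝ) ≤ ∑ i, (ν (shellCell c (radius j) r i) : ℝ) +
        ∑ i, (ν (shell (c i) (radius j) r) : ℝ) := mod_cast
      ν.univ_le_sum_shellCell_add_sum_shell fun x => (hc x).imp fun i hi => hi.trans (by
        simp only [radius]
        linarith)
    linarith

lemma exists_isSeparatedFamily [CompactSpace X] {η : ℝ} (hε : 0 < ε) (hη : 0 < η) :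
    ∃ r > 0, ∃ m : ℕ, ∀ ν : TotalContent X, ∃ Q : Fin m → Set X,
      IsSeparatedFamily ε r Q ∧ (1 - η) * ν univ ≤ ∑ i, (ν (Q i) : ℝ) := by
  obtain ⟨S, -, hfin, hS⟩ :=
    finite_cover_balls_of_compact (isCompact_univ (X := X)) (show 0 < ε / 4 by positivity)
  obtain ⟨m, c, -, rfl⟩ := hfin.fin_param
  have hc (x : X) : ∃ i, dist x (c i) ≤ ε / 4 := by
    obtain ⟨_, ⟨i, rfl⟩, hi⟩ := mem_iUnion₂.1 (hS (mem_univ x))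
    exact ⟨i, (mem_ball.1 hi).le⟩
  obtain ⟨k, hk⟩ := exists_nat_gt (m / η)
  have hk0 : (0 : ℝ) < k := (by positivity : 0 ≤ m / η).trans_lt hk
  refine ⟨2 * (ε / (8 * k)), by positivity, m, fun ν =>
    ν.exists_isSeparatedFamily_shellCell (by positivity) hc (k := k) ?_ (mod_cast hk0.ne') ?_⟩
  · field_simp
    norm_num
  · rw [Fintype.card_fin]
    exact ((div_lt_iff₀ hη).1 hk).le

end NearPartition

section TreeIntervals

variable {m : ℕ} {μ : List (Fin m) → ℝ} {c : ℝ}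

lemma exists_mem_Ioc_partialSum {p : Fin m → ℝ} {u : ℝ} (hu : u ∈ Ioc 0 (∑ i, p i)) :
    ∃ j : Fin m, u ∈ Ioc (Fin.partialSum p j.castSucc) (Fin.partialSum p j.castSucc + p j) := by
  by_contra! hnone
  have hlt (k : Fin (m + 1)) : Fin.partialSum p k < u := by
    induction k using Fin.induction with
    | zero => simpa only [Fin.partialSum_zero] using hu.1
    | succ j ih =>
      rw [Fin.partialSum_succ]
      exact not_le.1 fun hle => hnone j ⟨ih, hle⟩
  have htotal : Fin.partialSum p (Fin.last m) = ∑ i, p i := by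
    simp [Fin.partialSum, List.take_of_length_le, List.sum_ofFn]
  exact (htotal ▸ hlt (Fin.last m)).not_ge hu.2

/-- The left endpoint of the interval at a vertex of the `m`-ary tree when intervals of lengths `b`
are nested in lexicographic order. Vertices are words, the latest symbol being the head. -/
def leftEndpoint (b : List (Fin m) → ℝ) : List (Fin m) → ℝ
  | [] => 0
  | j :: w => leftEndpoint b w + Fin.partialSum (fun i => b (i :: w)) j.castSucc

lemma Ioc_leftEndpoint_subset_iUnion {b : List (Fin m) → ℝ} {w : List (Fin m)}
    (hb : ∑ j, b (j :: w) = b w) :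
    Ioc (leftEndpoint b w) (leftEndpoint b w + b w) ⊆
      ⋃ j, Ioc (leftEndpoint b (j :: w)) (leftEndpoint b (j :: w) + b (j :: w)) := by
  rintro u ⟨hu, hub⟩
  obtain ⟨j, hj⟩ := exists_mem_Ioc_partialSum (p := fun j => b (j :: w)) (u := u - leftEndpoint b w)
    ⟨sub_pos.2 hu, by linarith⟩
  exact mem_iUnion.2 ⟨j, by simp only [leftEndpoint]; linarith [hj.1],
    by simp only [leftEndpoint]; linarith [hj.2]⟩

/-- The flow down the tree which starts with the weight of the root and divides among the children
of each vertex in proportion to their weights `μ`. -/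
def normalizedFlow (μ : List (Fin m) → ℝ) : List (Fin m) → ℝ
  | [] => μ []
  | j :: w => normalizedFlow μ w * (μ (j :: w) / ∑ i, μ (i :: w))

lemma normalizedFlow_nonneg (hμ : ∀ w, 0 ≤ μ w) (w : List (Fin m)) : 0 ≤ normalizedFlow μ w := by
  induction w with
  | nil => exact hμ []
  | cons j w ih => exact mul_nonneg ih (div_nonneg (hμ _) (Finset.sum_nonneg fun i _ => hμ _))

lemma pow_mul_normalizedFlow_le (hμ : ∀ w, 0 ≤ μ w) (hc : 0 ≤ c)
    (hchildren : ∀ w, c * μ w ≤ ∑ i, μ (i :: w)) (w : List (Fin m)) :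
    c ^ w.length * normalizedFlow μ w ≤ μ w := by
  induction w with
  | nil => simp [normalizedFlow]
  | cons j w ih =>
    have hratio : 0 ≤ μ (j :: w) / ∑ i, μ (i :: w) :=
      div_nonneg (hμ _) (Finset.sum_nonneg fun i _ => hμ _)
    calc c ^ (j :: w).length * normalizedFlow μ (j :: w)
        = c * (c ^ w.length * normalizedFlow μ w) * (μ (j :: w) / ∑ i, μ (i :: w)) := by
          simp only [List.length_cons, normalizedFlow]
          ring
      _ ≤ (∑ i, μ (i :: w)) * (μ (j :: w) / ∑ i, μ (i :: w)) := by
          gcongr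
          exact (mul_le_mul_of_nonneg_left ih hc).trans (hchildren w)
      _ ≤ μ (j :: w) := by
          rw [mul_div_left_comm]
          exact mul_le_of_le_one_right (hμ _) (div_self_le_one _)

lemma sum_normalizedFlow_cons (hμ : ∀ w, 0 ≤ μ w) (hc : 0 < c)
    (hchildren : ∀ w, c * μ w ≤ ∑ i, μ (i :: w)) (w : List (Fin m)) :
    ∑ j, normalizedFlow μ (j :: w) = normalizedFlow μ w := by
  simp only [normalizedFlow]
  rw [← Finset.mul_sum, ← Finset.sum_div]
  rcases eq_or_ne (∑ i, μ (i :: w)) 0 with hsum | hsum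
  · have hw : μ w ≤ 0 := nonpos_of_mul_nonpos_right (hsum ▸ hchildren w) hc
    have hflow : normalizedFlow μ w ≤ 0 := nonpos_of_mul_nonpos_right
      ((pow_mul_normalizedFlow_le hμ hc.le hchildren w).trans hw) (pow_pos hc _)
    rw [hflow.antisymm (normalizedFlow_nonneg hμ w), zero_mul]
  · rw [div_self hsum, mul_one]

end TreeIntervals

section IteratedCell

variable {T : X → X} {m : ℕ} {P : TotalContent X → Fin m → Set X} {ν : TotalContent X}

/-- The cells obtained by splitting each cell `A` of depth `n` along the `n`-th iterate of `T` by
the family `P` chosen for the part of the content `ν` which sits on `A`. -/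
def iteratedCell (T : X → X) (P : TotalContent X → Fin m → Set X) (ν : TotalContent X) :
    List (Fin m) → Set X
  | [] => univ
  | j :: w => iteratedCell T P ν w ∩
      T^[w.length] ⁻¹' P (ν.mapRestrict (iteratedCell T P ν w) T^[w.length]) j

lemma mul_iteratedCell_le_sum {c : ℝ}
    (hP : ∀ ν : TotalContent X, c * ν univ ≤ ∑ i, (ν (P ν i) : ℝ))
    (w : List (Fin m)) :
    c * ν (iteratedCell T P ν w) ≤ ∑ i, (ν (iteratedCell T P ν (i :: w)) : ℝ) := by
  simpa only [iteratedCell, TotalContent.mapRestrict_apply, preimage_univ, inter_univ] using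
    hP (ν.mapRestrict (iteratedCell T P ν w) T^[w.length])

variable [PseudoMetricSpace X] {ε r : ℝ}

lemma isClosed_iteratedCell (hT : Continuous T) (hP : ∀ ν, IsSeparatedFamily ε r (P ν))
    (w : List (Fin m)) : IsClosed (iteratedCell T P ν w) := by
  induction w with
  | nil => exact isClosed_univ
  | cons j w ih => exact ih.inter (((hP _).isClosed j).preimage (hT.iterate _))

lemma bowenDiamLE_iteratedCell (hP : ∀ ν, IsSeparatedFamily ε r (P ν)) (w : List (Fin m)) :
    BowenDiamLE T w.length ε (iteratedCell T P ν w) := by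
  induction w with
  | nil => exact fun _ _ _ _ _ hi => absurd hi (Nat.not_lt_zero _)
  | cons j w ih =>
    intro x hx y hy i hi
    rcases Nat.lt_succ_iff_lt_or_eq.1 hi with hlt | rfl
    · exact ih x hx.1 y hy.1 i hlt
    · exact (hP _).dist_le j hx.2 hy.2

lemma eq_of_mem_iteratedCell (hP : ∀ ν, IsSeparatedFamily ε r (P ν)) {w w' : List (Fin m)} {x y : X}
    (hlen : w.length = w'.length) (hx : x ∈ iteratedCell T P ν w) (hy : y ∈ iteratedCell T P ν w')
    (hxy : ∀ i < w.length, dist (T^[i] x) (T^[i] y) < r) : w = w' := by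
  induction w generalizing w' with
  | nil => exact (List.length_eq_zero_iff.1 hlen.symm).symm
  | cons j w ih =>
    obtain _ | ⟨j', w'⟩ := w'
    · simp at hlen
    · obtain rfl := ih (Nat.succ_injective hlen) hx.1 hy.1 fun i hi => hxy i (Nat.lt_succ_of_lt hi)
      rw [(hP _).eq_of_dist_lt hx.2 hy.2 (hxy _ (Nat.lt_succ_self _))]

end IteratedCell

section CodingTree

variable [PseudoMetricSpace X] {T : X → X} {l : ℝ}

/-- A coding of points of `X` by real numbers in `(0, 2]`. The vertices of the `m`-ary tree are
words, the latest symbol being the head; a vertex `w` of depth `n` carries a closed cell, determined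
by the orbit of length `n` up to `r`, and an interval of length at most `2 * exp (-l * n)`. -/
structure CodingTree (T : X → X) (m : ℕ) (l r : ℝ) where
  cell : List (Fin m) → Set X
  interval : List (Fin m) → Set ℝ
  isClosed_cell (w : List (Fin m)) : IsClosed (cell w)
  cell_cons_subset (j : Fin m) (w : List (Fin m)) : cell (j :: w) ⊆ cell w
  eq_of_dist_lt ⦃w w' : List (Fin m)⦄ ⦃x y : X⦄ (hlen : w.length = w'.length)
    (hx : x ∈ cell w) (hy : y ∈ cell w')
    (hxy : ∀ i < w.length, dist (T^[i] x) (T^[i] y) < r) : w = w'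
  Ioc_subset_interval_nil : Ioc 0 2 ⊆ interval []
  interval_subset_iUnion (w : List (Fin m)) : interval w ⊆ ⋃ j, interval (j :: w)
  exists_interval_subset_Icc (w : List (Fin m)) :
    ∃ a, interval w ⊆ Icc a (a + 2 * Real.exp (-(l * w.length)))
  cell_nonempty ⦃w : List (Fin m)⦄ (hw : (interval w).Nonempty) : (cell w).Nonempty

lemma exists_codingTree [CompactSpace X] {l' : ℝ} (hT : Continuous T) (hll : l' < l)
    (hl : (l : EReal) < subEnt T univ) :
    ∃ r > 0, ∃ m, Nonempty (CodingTree T m l' r) := by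
  obtain ⟨ε, hε, ν, hν1, hν⟩ := exists_totalContent_le_exp hT hl
  let c := Real.exp (l' - l)
  have hc : 0 < c := Real.exp_pos _
  obtain ⟨r, hr, m, hQ⟩ := exists_isSeparatedFamily (X := X) hε
    (sub_pos.2 (Real.exp_lt_one_iff.2 (sub_neg.2 hll)) : 0 < 1 - c)
  choose P hsep hP using hQ
  simp only [sub_sub_cancel] at hP
  let μ (w : List (Fin m)) : ℝ := 2 * ν (iteratedCell T P ν w)
  have hμ (w) : 0 ≤ μ w := by positivity
  have hchildren (w) : c * μ w ≤ ∑ i, μ (i :: w) := by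
    rw [← Finset.mul_sum, mul_left_comm]
    exact mul_le_mul_of_nonneg_left (mul_iteratedCell_le_sum hP w) zero_le_two
  have hflow := pow_mul_normalizedFlow_le hμ hc.le hchildren
  have hlength (w) : normalizedFlow μ w ≤ 2 * Real.exp (-(l' * w.length)) := by
    refine le_of_mul_le_mul_left ((hflow w).trans ?_) (pow_pos hc w.length)
    calc μ w ≤ 2 * Real.exp (-(l * w.length)) :=
          mul_le_mul_of_nonneg_left (hν _ _ (bowenDiamLE_iteratedCell hsep w)) zero_le_two
      _ = c ^ w.length * (2 * Real.exp (-(l' * w.length))) := by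
          rw [← Real.exp_nat_mul, mul_left_comm, ← Real.exp_add]
          ring_nf
  refine ⟨r, hr, m, ⟨{
    cell := iteratedCell T P ν
    interval w := Ioc (leftEndpoint (normalizedFlow μ) w)
      (leftEndpoint (normalizedFlow μ) w + normalizedFlow μ w)
    isClosed_cell := isClosed_iteratedCell hT hsep
    cell_cons_subset _ _ := inter_subset_left
    eq_of_dist_lt _ _ _ _ := eq_of_mem_iteratedCell hsep
    Ioc_subset_interval_nil := by
      simp [leftEndpoint, normalizedFlow, μ, iteratedCell, hν1]
    interval_subset_iUnion w :=
      Ioc_leftEndpoint_subset_iUnion (sum_normalizedFlow_cons hμ hc hchildren w)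
    exists_interval_subset_Icc w :=
      ⟨_, Ioc_subset_Icc_self.trans (Icc_subset_Icc_right (by gcongr; exact hlength w))⟩
    cell_nonempty w hw := ?_ }⟩⟩
  by_contra! hempty
  have hμw : μ w = 0 := by simp [μ, hempty]
  have hpos : 0 < normalizedFlow μ w := by simpa only [nonempty_Ioc, lt_add_iff_pos_right] using hw
  exact (mul_pos (pow_pos hc w.length) hpos).not_ge ((hflow w).trans_eq hμw)

end CodingTree

section DyadicCovering

open scoped Pointwise

/-- The upper box dimension of `D` is at most `β`, in a quantitative form: for every `n` at most
`2 * 2 ^ (β * n)` intervals of length `2 ^ (-n)` cover `D`. -/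
def BoxDimLE (β : ℝ) (D : Set ℝ) : Prop :=
  ∀ n : ℕ, ∃ F : Finset ℝ, (F.card : ℝ) ≤ 2 * ((2 : ℝ) ^ n) ^ β ∧
    D ⊆ ⋃ f ∈ F, Icc f (f + ((2 : ℝ) ^ n)⁻¹)

variable {β : ℝ} {D J : Set ℝ}

lemma BoxDimLE.neg (hD : BoxDimLE β D) : BoxDimLE β (-D) := fun n => by
  classical
  obtain ⟨F, hF, hcover⟩ := hD n
  refine ⟨F.image fun f => -(f + ((2 : ℝ) ^ n)⁻¹), ?_, fun d hd => ?_⟩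
  · exact (Nat.cast_le.2 Finset.card_image_le).trans hF
  · obtain ⟨f, hf, hfd⟩ := mem_iUnion₂.1 (hcover hd)
    exact mem_biUnion (Finset.mem_image_of_mem _ hf) ⟨by linarith [hfd.2], by linarith [hfd.1]⟩

lemma BoxDimLE.volume_add_le {a ρ : ℝ} (hβ : 0 ≤ β) (hD : BoxDimLE β D) (hρ : 0 < ρ) (hρ1 : ρ ≤ 1)
    (hJ : J ⊆ Icc a (a + 2 * ρ)) : volume (J + D) ≤ ENNReal.ofReal (8 * ρ ^ (1 - β)) := by
  obtain ⟨n, hnρ, hρn⟩ := exists_nat_pow_near (one_le_inv_iff₀.2 ⟨hρ, hρ1⟩) one_lt_two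
  obtain ⟨F, hF, hcover⟩ := hD n
  have hmesh : ((2 : ℝ) ^ n)⁻¹ ≤ 2 * ρ := by
    rw [pow_succ, inv_lt_iff_one_lt_mul₀ hρ] at hρn
    rw [inv_le_iff_one_le_mul₀ (by positivity)]
    linarith
  have hsum : J + D ⊆ ⋃ f ∈ F, Icc (a + f) (a + f + 4 * ρ) := by
    rintro _ ⟨u, hu, d, hd, rfl⟩
    obtain ⟨f, hf, hfd⟩ := mem_iUnion₂.1 (hcover hd)
    exact mem_biUnion hf ⟨by linarith [(hJ hu).1, hfd.1], by linarith [(hJ hu).2, hfd.2]⟩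
  calc volume (J + D) ≤ ∑ f ∈ F, volume (Icc (a + f) (a + f + 4 * ρ)) :=
        (measure_mono hsum).trans (measure_biUnion_finset_le _ _)
    _ = ENNReal.ofReal (F.card * (4 * ρ)) := by
        simp [ENNReal.ofReal_mul, Real.volume_Icc]
    _ ≤ ENNReal.ofReal (2 * (ρ⁻¹) ^ β * (4 * ρ)) := by
        gcongr
        exact hF.trans (by gcongr)
    _ = ENNReal.ofReal (8 * ρ ^ (1 - β)) := by
        rw [Real.rpow_sub hρ, Real.rpow_one, Real.inv_rpow hρ.le]
        ring_nf

/-- The real numbers in `[0, 1]` with a binary expansion supported on `S`. -/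
def digitSet (S : Set ℕ) : Set ℝ := Real.ofDigits '' {d : ℕ → Fin 2 | ∀ i ∉ S, d i = 0}

lemma digitSet_subset_Icc (S : Set ℕ) : digitSet S ⊆ Icc 0 1 :=
  image_subset_iff.2 fun _ _ => ⟨Real.ofDigits_nonneg _, Real.ofDigits_le_one _⟩

lemma Icc_subset_digitSet_add_digitSet_compl (S : Set ℕ) :
    Icc 0 1 ⊆ digitSet S + digitSet Sᶜ := by
  classical
  intro t ht
  obtain ⟨d, -, rfl⟩ := Real.ofDigits_SurjOn one_lt_two ht
  refine ⟨_, ⟨fun i => if i ∈ S then d i else 0, fun i hi => if_neg hi, rfl⟩,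
    _, ⟨fun i => if i ∈ S then 0 else d i, fun i hi => if_pos (not_not.1 hi), rfl⟩, ?_⟩
  simp only [Real.ofDigits]
  rw [← Summable.tsum_add Real.summable_ofDigitsTerm Real.summable_ofDigitsTerm]
  refine tsum_congr fun i => ?_
  by_cases hi : i ∈ S <;> simp [Real.ofDigitsTerm, hi]

open scoped Classical in
lemma boxDimLE_digitSet {S : Set ℕ}
    (hS : ∀ n : ℕ, (((Finset.range n).filter (· ∈ S)).card : ℝ) ≤ β * n + 1) :
    BoxDimLE β (digitSet S) := by
  intro n
  let value (A : Finset ℕ) : ℝ := ∑ i ∈ A, ((2 : ℝ) ^ (i + 1))⁻¹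
  refine ⟨((Finset.range n).filter (· ∈ S)).powerset.image value, ?_, ?_⟩
  · calc ((((Finset.range n).filter (· ∈ S)).powerset.image value).card : ℝ)
        ≤ 2 ^ ((Finset.range n).filter (· ∈ S)).card := by
          exact_mod_cast Finset.card_image_le.trans_eq (Finset.card_powerset _)
      _ ≤ 2 ^ (β * n + 1) := by
          rw [← Real.rpow_natCast]
          exact Real.rpow_le_rpow_of_exponent_le one_le_two (hS n)
      _ = 2 * ((2 : ℝ) ^ n) ^ β := by
          rw [Real.rpow_add_one two_ne_zero, mul_comm β, Real.rpow_mul zero_le_two,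
            Real.rpow_natCast, mul_comm]
  · rintro _ ⟨d, hd, rfl⟩
    have hterm (i : ℕ) : Real.ofDigitsTerm d i = if d i ≠ 0 then ((2 : ℝ) ^ (i + 1))⁻¹ else 0 := by
      obtain hi | hi : d i = 0 ∨ d i = 1 := by omega
      all_goals simp [Real.ofDigitsTerm, hi]
    have hvalue : value ((Finset.range n).filter fun i => d i ≠ 0) =
        ∑ i ∈ Finset.range n, Real.ofDigitsTerm d i := by
      simp only [value, hterm, Finset.sum_filter]
    refine mem_biUnion (Finset.mem_image_of_mem value
      (a := (Finset.range n).filter fun i => d i ≠ 0) (Finset.mem_powerset.2 fun i hi => ?_)) ?_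
    · rw [Finset.mem_filter] at hi ⊢
      exact ⟨hi.1, not_imp_comm.1 (hd i) hi.2⟩
    · have hpos : 0 < (((2 : ℕ) : ℝ) ^ n)⁻¹ := by positivity
      rw [hvalue, Real.ofDigits_eq_sum_add_ofDigits d n]
      exact ⟨le_add_of_nonneg_right (mul_nonneg hpos.le (Real.ofDigits_nonneg _)), by
        simpa using mul_le_of_le_one_right hpos.le (Real.ofDigits_le_one _)⟩

/-- The Beatty-type set of density `s`: the times at which `⌊s * n⌋` jumps. -/
def beattySet (s : ℝ) : Set ℕ := {i | ⌊s * i⌋₊ < ⌊s * (i + 1)⌋₊}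

open scoped Classical in
lemma card_filter_range_mem_beattySet {s : ℝ} (hs0 : 0 ≤ s) (hs1 : s ≤ 1) (n : ℕ) :
    ((Finset.range n).filter (· ∈ beattySet s)).card = ⌊s * n⌋₊ := by
  induction n with
  | zero => simp
  | succ n ih =>
    have hmono : ⌊s * n⌋₊ ≤ ⌊s * (n + 1)⌋₊ := by gcongr; linarith
    have hjump : ⌊s * (n + 1)⌋₊ ≤ ⌊s * n⌋₊ + 1 := by
      rw [← Nat.floor_add_one (by positivity)]
      gcongr
      linarith
    rw [Finset.range_add_one, Finset.filter_insert, Nat.cast_add_one]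
    split_ifs with hn
    · rw [Finset.card_insert_of_notMem (by simp), ih]
      exact (Nat.succ_le_of_lt hn).antisymm hjump
    · rw [ih]
      exact hmono.antisymm (not_lt.1 hn)

lemma exists_boxDimLE_add {s : ℝ} (hs0 : 0 ≤ s) (hs1 : s ≤ 1) :
    ∃ C D : Set ℝ, C ⊆ Icc 0 1 ∧ Icc 0 1 ⊆ C + D ∧ BoxDimLE s C ∧ BoxDimLE (1 - s) D := by
  classical
  refine ⟨digitSet (beattySet s), digitSet (beattySet s)ᶜ, digitSet_subset_Icc _,
    Icc_subset_digitSet_add_digitSet_compl _, boxDimLE_digitSet fun n => ?_,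
    boxDimLE_digitSet fun n => ?_⟩
  · rw [card_filter_range_mem_beattySet hs0 hs1]
    linarith [Nat.floor_le (show 0 ≤ s * n by positivity)]
  · have hcard := Finset.card_filter_add_card_filter_not (s := Finset.range n) (· ∈ beattySet s)
    rw [card_filter_range_mem_beattySet hs0 hs1, Finset.card_range] at hcard
    have hcard : (⌊s * n⌋₊ : ℝ) + ((Finset.range n).filter (· ∉ beattySet s)).card = n :=
      mod_cast hcard
    simp only [mem_compl_iff]
    linarith [Nat.lt_floor_add_one (s * n)]

end DyadicCovering
lemma exists_fine_open_cover [PseudoMetricSpace X] [CompactSpace X] {r : ℝ} (hr : 0 < r) :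
    ∃ U : Finset (Set X), ((∀ A ∈ U, IsOpen A) ∧ ⋃₀ (↑U : Set (Set X)) = univ) ∧
      ∀ A ∈ U, ∀ x ∈ A, ∀ y ∈ A, dist x y < r := by
  classical
  obtain ⟨S, -, hSfin, hS⟩ := (isCompact_univ (X := X)).finite_cover_balls (half_pos hr)
  refine ⟨hSfin.toFinset.image fun y => ball y (r / 2), ⟨?_, univ_subset_iff.1 (hS.trans ?_)⟩, ?_⟩
  · exact Finset.forall_mem_image.2 fun y _ => isOpen_ball
  · simp [sUnion_image]
  · refine Finset.forall_mem_image.2 fun y _ x hx z hz => ?_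
    linarith [dist_triangle_right x z y, mem_ball.1 hx, mem_ball.1 hz]

namespace CodingTree

section

variable [PseudoMetricSpace X] {T : X → X} {m n : ℕ} {l r β : ℝ} (Γ : CodingTree T m l r)
  {J C D : Set ℝ} {E : Set X} {U : Finset (Set X)}

/-- The number `u` codes the point `x`: at every depth some vertex of the tree has `u` in its
interval and `x` in its cell. A point may have many codes, and a number may code many points. -/
def Codes (u : ℝ) (x : X) : Prop :=
  ∀ n, ∃ w : List (Fin m), w.length = n ∧ u ∈ Γ.interval w ∧ x ∈ Γ.cell w

/-- The set of all codes of points of `E`. -/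
def codeSet (E : Set X) : Set ℝ := {u | ∃ x ∈ E, Γ.Codes u x}

/-- The set of all points coded by numbers in `J`. -/
def codedSet (J : Set ℝ) : Set X := {x | ∃ u ∈ J, Γ.Codes u x}

lemma exists_codes [CompactSpace X] {u : ℝ} (hu : u ∈ Ioc 0 2) : ∃ x, Γ.Codes u x := by
  have hchild (w : {w // u ∈ Γ.interval w}) : ∃ j, u ∈ Γ.interval (j :: w) :=
    mem_iUnion.1 (Γ.interval_subset_iUnion w w.2)
  choose j hj using hchild
  let branch (n : ℕ) : {w // u ∈ Γ.interval w} :=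
    (fun w => ⟨j w :: w, hj w⟩)^[n] ⟨[], Γ.Ioc_subset_interval_nil hu⟩
  have hsucc (n) : (branch (n + 1) : List (Fin m)) = j (branch n) :: (branch n).1 := by
    simp only [branch, Function.iterate_succ_apply']
  have hlength (n) : (branch n : List (Fin m)).length = n := by
    induction n with
    | zero => rfl
    | succ n ih => rw [hsucc, List.length_cons, ih]
  obtain ⟨x, hx⟩ := IsCompact.nonempty_iInter_of_sequence_nonempty_isCompact_isClosed
    (fun n => Γ.cell (branch n)) (fun n => (hsucc n).symm ▸ Γ.cell_cons_subset _ _)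
    (fun n => Γ.cell_nonempty ⟨u, (branch n).2⟩) (Γ.isClosed_cell _).isCompact
    (fun n => Γ.isClosed_cell _)
  exact ⟨x, fun n => ⟨branch n, hlength n, (branch n).2, mem_iInter.1 hx n⟩⟩

lemma exists_codeSet_subset_Icc
    (hE : ∀ x ∈ E, ∀ y ∈ E, ∀ i < n, dist (T^[i] x) (T^[i] y) < r) :
    ∃ a, Γ.codeSet E ⊆ Icc a (a + 2 * Real.exp (-(l * n))) := by
  rcases (Γ.codeSet E).eq_empty_or_nonempty with hempty | ⟨u, x, hx, hux⟩
  · exact ⟨0, hempty ▸ empty_subset _⟩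
  obtain ⟨w, rfl, -, hxw⟩ := hux n
  obtain ⟨a, ha⟩ := Γ.exists_interval_subset_Icc w
  refine ⟨a, fun v ⟨y, hy, hvy⟩ => ha ?_⟩
  obtain ⟨w', hlen, hvw', hyw'⟩ := hvy w.length
  rwa [Γ.eq_of_dist_lt hlen.symm hxw hyw' (hE x hx y hy)]

open scoped Pointwise

lemma volume_codeSet_add_le (hl : 0 ≤ l) (hβ : 0 ≤ β) (hD : BoxDimLE β D)
    (hE : ∀ x ∈ E, ∀ y ∈ E, ∀ i < n, dist (T^[i] x) (T^[i] y) < r) :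
    volume (Γ.codeSet E + D) ≤ 8 * ENNReal.ofReal (Real.exp (-((1 - β) * l * n))) := by
  obtain ⟨a, ha⟩ := Γ.exists_codeSet_subset_Icc hE
  refine (hD.volume_add_le hβ (Real.exp_pos _)
    (Real.exp_le_one_iff.2 (neg_nonpos.2 (by positivity))) ha).trans_eq ?_
  rw [← Real.exp_mul, ENNReal.ofReal_mul (by norm_num), ENNReal.ofReal_ofNat]
  ring_nf

lemma volume_codeSet_add_le_expWeight (hl : 0 ≤ l) (hβ : 0 ≤ β) (hpos : 0 < (1 - β) * l)
    (hD : BoxDimLE β D) (hU : ∀ A ∈ U, ∀ x ∈ A, ∀ y ∈ A, dist x y < r) (E : Set X) :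
    volume (Γ.codeSet E + D) ≤ 8 * expWeight ((1 - β) * l) (nTU T U E) := by
  have hbound (n : ℕ) (hn : n ≤ nTU T U E) :
      volume (Γ.codeSet E + D) ≤ 8 * ENNReal.ofReal (Real.exp (-((1 - β) * l * n))) :=
    Γ.volume_codeSet_add_le hl hβ hD fun x hx y hy i hi => by
      obtain ⟨A, hA, hEA⟩ := natCast_le_nTU_iff.1 hn i hi
      exact hU A hA _ (hEA (mem_image_of_mem _ hx)) _ (hEA (mem_image_of_mem _ hy))
  generalize nTU T U E = N at hbound
  cases N with
  | top =>
    rw [expWeight_top_of_pos hpos]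
    have hlim := tendsto_ofReal_exp_mul_atTop_zero (neg_lt_zero.2 hpos)
    simp only [neg_mul] at hlim
    exact ge_of_tendsto' (ENNReal.Tendsto.const_mul hlim (Or.inr ENNReal.ofNat_ne_top))
      fun n => hbound n le_top
  | coe n => simpa only [expWeight_natCast] using hbound n le_rfl

lemma volume_add_le_mTU [CompactSpace X] (hl : 0 ≤ l) (hβ : 0 ≤ β) (hpos : 0 < (1 - β) * l)
    (hD : BoxDimLE β D) (hU : ∀ A ∈ U, ∀ x ∈ A, ∀ y ∈ A, dist x y < r) (hJ : J ⊆ Ioc 0 2) (k : ℕ) :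
    volume (J + D) ≤ 8 * mTU T U (Γ.codedSet J) ((1 - β) * l) k := by
  simp only [mTU, ENNReal.mul_iInf_of_ne (OfNat.ofNat_ne_zero 8) (ENNReal.ofNat_ne_top)]
  refine le_iInf₂ fun ℰ ⟨hcount, hcover, _⟩ => ?_
  have hsub : J + D ⊆ ⋃ E ∈ ℰ, (Γ.codeSet E + D) := by
    rintro _ ⟨u, hu, d, hd, rfl⟩
    obtain ⟨x, hx⟩ := Γ.exists_codes (hJ hu)
    obtain ⟨E, hE, hxE⟩ := hcover ⟨u, hu, hx⟩
    exact mem_biUnion hE (add_mem_add ⟨x, hxE, hx⟩ hd)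
  calc volume (J + D) ≤ ∑' E : ℰ, volume (Γ.codeSet E + D) :=
        (measure_mono hsub).trans (measure_biUnion_le _ hcount _)
    _ ≤ ∑' E : ℰ, 8 * expWeight ((1 - β) * l) (nTU T U E) :=
        ENNReal.tsum_le_tsum fun E => Γ.volume_codeSet_add_le_expWeight hl hβ hpos hD hU E
    _ = 8 * ∑' E : ℰ, expWeight ((1 - β) * l) (nTU T U E) := ENNReal.tsum_mul_left

lemma le_hB_codedSet [CompactSpace X] (hr : 0 < r) (hl : 0 ≤ l) (hβ : 0 ≤ β)
    (hpos : 0 < (1 - β) * l) (hD : BoxDimLE β D) (hJ : J ⊆ Ioc 0 2) (hJD : volume (J + D) ≠ 0) :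
    (((1 - β) * l : ℝ) : EReal) ≤ hB T (Γ.codedSet J) := by
  obtain ⟨U, hUcover, hU⟩ := exists_fine_open_cover (X := X) hr
  refine le_iSup₂_of_le U hUcover (le_of_not_gt fun hlt => hJD (le_zero_iff.1 ?_))
  have hzero := mTUlim_eq_zero_iff.1 (mTUlim_eq_zero_of_hBU_lt hlt) 0
  simpa only [hzero, mul_zero] using Γ.volume_add_le_mTU hl hβ hpos hD hU hJ 0

lemma sepMaxCard_codedSet_le {ε : ℝ} {S : Finset X}
    (hS : ∀ x, ∃ y ∈ S, x ∈ bowenBall T n (ε / 2) y) (t : ℝ) :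
    sepMaxCard T n ε (Γ.codedSet (C + {t})) ≤
      ∑ y ∈ S, (Γ.codeSet (bowenBall T n (ε / 2) y) + -C).indicator 1 t := by
  classical
  have hcover : ∀ x ∈ Γ.codedSet (C + {t}),
      ∃ y ∈ {y ∈ S | t ∈ Γ.codeSet (bowenBall T n (ε / 2) y) + -C},
        x ∈ bowenBall T n (ε / 2) y := by
    rintro x ⟨_, ⟨c, hc, _, rfl, rfl⟩, hux⟩
    obtain ⟨y, hy, hxy⟩ := hS x
    refine ⟨y, Finset.mem_filter.2 ⟨hy, ?_⟩, hxy⟩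
    exact ⟨_, ⟨x, hxy, hux⟩, -c, neg_mem_neg.2 hc, by simp only; ring⟩
  refine (sepMaxCard_le_card_of_cover (fun y _ => bowenDiamLE_bowenBall) hcover).trans_eq ?_
  simp [indicator_apply]

end

end CodingTree

lemma mul_measure_le_sum_measure {α ι : Type*} [MeasurableSpace α] (μ : Measure α)
    (S : Finset ι) (G : ι → Set α) (c : ℝ≥0∞) :
    c * μ {t | c ≤ ∑ i ∈ S, (G i).indicator 1 t} ≤ ∑ i ∈ S, μ (G i) := by
  have hmeas (i) : Measurable ((toMeasurable μ (G i)).indicator (1 : α → ℝ≥0∞)) :=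
    measurable_one.indicator (measurableSet_toMeasurable _ _)
  calc c * μ {t | c ≤ ∑ i ∈ S, (G i).indicator 1 t}
      ≤ c * μ {t | c ≤ ∑ i ∈ S, (toMeasurable μ (G i)).indicator 1 t} := by
        refine mul_le_mul_right (measure_mono fun t (ht : c ≤ _) => ht.trans ?_) c
        exact Finset.sum_le_sum fun i _ => indicator_le_indicator_of_subset
          (subset_toMeasurable _ _) (fun _ => zero_le) t
    _ ≤ ∫⁻ t, ∑ i ∈ S, (toMeasurable μ (G i)).indicator 1 t ∂μ :=
        mul_meas_ge_le_lintegral (Finset.measurable_sum _ fun i _ => hmeas i) c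
    _ = ∑ i ∈ S, μ (G i) := by
        rw [lintegral_finsetSum _ fun i _ => hmeas i]
        simp only [lintegral_indicator_one (measurableSet_toMeasurable _ _), measure_toMeasurable]

lemma ae_eventually_notMem_of_eventually_le {α : Type*} [MeasurableSpace α] {μ : Measure α}
    {s : ℕ → Set α} {f : ℕ → ℝ} (hf : Summable f)
    (hs : ∀ᶠ n in atTop, μ (s n) ≤ ENNReal.ofReal (f n)) :
    ∀ᵐ x ∂μ, ∀ᶠ n in atTop, x ∉ s n := by
  obtain ⟨N, hN⟩ := eventually_atTop.1 hs
  have hsum : ∑' n, μ (s (n + N)) ≠ ⊤ :=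
    ne_top_of_le_ne_top ((summable_nat_add_iff N).2 hf).tsum_ofReal_ne_top
      (ENNReal.tsum_le_tsum fun n => hN _ (Nat.le_add_left _ _))
  filter_upwards [ae_eventually_notMem hsum] with x hx
  rwa [← map_add_atTop_eq_nat N, eventually_map]

section CodedSets

open scoped Pointwise

variable [PseudoMetricSpace X] [CompactSpace X] {T : X → X} {m : ℕ} {l r s ε H : ℝ} {C : Set ℝ}
  (Γ : CodingTree T m l r)

namespace CodingTree

lemma mul_volume_lt_sepMaxCard_le (hT : Continuous T) (hl : 0 ≤ l) (hs : 0 ≤ s)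
    (hC : BoxDimLE s C) (hε : 0 < ε) (hεr : ε < r) (n : ℕ) (c : ℝ≥0∞) :
    c * volume {t | c < sepMaxCard T n ε (Γ.codedSet (C + {t}))} ≤
      sepMaxCard T n (ε / 2) univ *
        (8 * ENNReal.ofReal (Real.exp (-((1 - s) * l * n)))) := by
  obtain ⟨S, -, hS, hcard⟩ := exists_isSep_card_eq (sepMaxCard_lt_top hT (half_pos hε) :
    sepMaxCard T n (ε / 2) univ < ⊤)
  have hcover (x : X) : ∃ y ∈ S, x ∈ bowenBall T n (ε / 2) y :=
    hS.exists_mem_bowenBall (subset_univ _) (half_pos hε).le hcard.ge (mem_univ x)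
  have hball (y : X) : volume (Γ.codeSet (bowenBall T n (ε / 2) y) + -C) ≤
      8 * ENNReal.ofReal (Real.exp (-((1 - s) * l * n))) :=
    Γ.volume_codeSet_add_le hl hs hC.neg fun x hx z hz i hi =>
      (bowenDiamLE_bowenBall x hx z hz i hi).trans_lt hεr
  calc c * volume {t | c < sepMaxCard T n ε (Γ.codedSet (C + {t}))}
      ≤ c * volume {t | c ≤ ∑ y ∈ S,
          (Γ.codeSet (bowenBall T n (ε / 2) y) + -C).indicator 1 t} :=
        mul_le_mul_right (measure_mono fun t ht =>
          ht.le.trans (Γ.sepMaxCard_codedSet_le hcover t)) c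
    _ ≤ ∑ y ∈ S, volume (Γ.codeSet (bowenBall T n (ε / 2) y) + -C) :=
        mul_measure_le_sum_measure volume S _ c
    _ ≤ S.card * (8 * ENNReal.ofReal (Real.exp (-((1 - s) * l * n)))) := by
        simpa only [nsmul_eq_mul] using Finset.sum_le_card_nsmul S _ _ fun y _ => hball y
    _ = _ := by rw [hcard]

lemma ae_eventually_sepMaxCard_le (hT : Continuous T) (hl : 0 ≤ l) (hs : 0 ≤ s)
    (hC : BoxDimLE s C) (hH : subEnt T (univ : Set X) ≤ H) (hε : 0 < ε) (hεr : ε < r) :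
    ∀ᵐ t : ℝ, ∀ᶠ n : ℕ in atTop, sepMaxCard T n ε (Γ.codedSet (C + {t})) ≤
      ENNReal.ofReal (Real.exp ((H - (1 - s) * l + ε) * n)) := by
  have hsummable : Summable fun n : ℕ => 8 * Real.exp (n * -(ε / 2)) :=
    (Real.summable_exp_nat_mul_iff.2 (by linarith)).mul_left 8
  have hbad : ∀ᶠ n : ℕ in atTop, volume {t | ENNReal.ofReal
      (Real.exp ((H - (1 - s) * l + ε) * n)) < sepMaxCard T n ε (Γ.codedSet (C + {t}))} ≤
        ENNReal.ofReal (8 * Real.exp (n * -(ε / 2))) := by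
    filter_upwards [subEnt_le_iff.1 hH _ (half_pos hε) _ (half_pos hε)] with n hn
    have hexp : 0 < Real.exp ((H - (1 - s) * l + ε) * n) := Real.exp_pos _
    refine (ENNReal.mul_le_mul_iff_right (ENNReal.ofReal_pos.2 hexp).ne'
      ENNReal.ofReal_ne_top).1 ((Γ.mul_volume_lt_sepMaxCard_le hT hl hs hC hε hεr n _).trans
        ((mul_le_mul_left hn _).trans_eq ?_))
    rw [← ENNReal.ofReal_mul hexp.le, ← ENNReal.ofReal_ofNat, ← ENNReal.ofReal_mul (by norm_num),
      ← ENNReal.ofReal_mul (Real.exp_pos _).le, mul_left_comm, mul_left_comm (Real.exp _) 8,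
      ← Real.exp_add, ← Real.exp_add]
    ring_nf
  simpa only [mem_ofPred_eq, not_lt] using ae_eventually_notMem_of_eventually_le hsummable hbad

lemma ae_subEnt_codedSet_le (hT : Continuous T) (hr : 0 < r) (hl : 0 ≤ l) (hs : 0 ≤ s)
    (hC : BoxDimLE s C) (hH : subEnt T (univ : Set X) ≤ H) :
    ∀ᵐ t : ℝ, subEnt T (Γ.codedSet (C + {t})) ≤ ((H - (1 - s) * l : ℝ) : EReal) := by
  let u (k : ℕ) : ℝ := r / (k + 2)
  have hu : Tendsto u atTop (𝓝 0) := tendsto_const_nhds.div_atTop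
    (tendsto_atTop_add_const_right _ _ tendsto_natCast_atTop_atTop)
  have hur (k) : u k < r := div_lt_self hr (by linarith [(k.cast_nonneg : (0 : ℝ) ≤ k)])
  filter_upwards [ae_all_iff.2 fun k => Γ.ae_eventually_sepMaxCard_le hT hl hs hC hH
    (by positivity : 0 < u k) (hur k)] with t ht
  exact subEnt_le_of_tendsto_zero hu ht

end CodingTree

lemma exists_subEnt_le_mul_le_hB (hT : Continuous T) (hH : subEnt T (univ : Set X) = H)
    (hs0 : 0 < s) (hs1 : s ≤ 1) (hl0 : 0 < l) (hlH : l < H) :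
    ∃ K : Set X, subEnt T K ≤ ((H - (1 - s) * l : ℝ) : EReal) ∧ ((s * l : ℝ) : EReal) ≤ hB T K := by
  obtain ⟨l', hll', hl'H⟩ := exists_between hlH
  obtain ⟨r, hr, m, ⟨Γ⟩⟩ := exists_codingTree hT hll' (hH ▸ EReal.coe_lt_coe_iff.2 hl'H)
  obtain ⟨C, D, hCI, hCD, hC, hD⟩ := exists_boxDimLE_add hs0.le hs1
  obtain ⟨t, ⟨ht0, ht1⟩, ht⟩ := ((frequently_ae_mem_iff (s := Ioc (0 : ℝ) 1)).2
    (by simp)).and_eventually (Γ.ae_subEnt_codedSet_le hT hr hl0.le hs0.le hC hH.le) |>.exists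
  have hJ : C + {t} ⊆ Ioc 0 2 := by
    rintro _ ⟨c, hc, _, rfl, rfl⟩
    exact ⟨by linarith [(hCI hc).1], by linarith [(hCI hc).2]⟩
  have hsum : Icc (0 + t) (1 + t) ⊆ C + {t} + D := by
    rw [← image_add_const_Icc, add_right_comm, add_singleton]
    exact image_mono hCD
  have hJD : volume (C + {t} + D) ≠ 0 :=
    (measure_pos_of_superset hsum (by simp)).ne'
  have hlower := Γ.le_hB_codedSet hr hl0.le (sub_nonneg.2 hs1)
    (by rw [sub_sub_cancel]; positivity) hD hJ hJD
  rw [sub_sub_cancel] at hlower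
  exact ⟨_, ht, hlower⟩

lemma exists_subEnt_le_lt_hB {g h : ℝ} (hT : Continuous T) (hH : subEnt T (univ : Set X) = H)
    (hg : 0 < g) (hgh : g < h) (hhH : h ≤ H) :
    ∃ K : Set X, subEnt T K ≤ h ∧ (g : EReal) < hB T K := by
  obtain ⟨s, hsH⟩ : ∃ s, s * H = (g + h) / 2 := ⟨(g + h) / 2 / H, div_mul_cancel₀ _ (by linarith)⟩
  have hs0 : 0 < s := pos_of_mul_pos_left (by linarith) (by linarith : 0 ≤ H)
  have hs1 : s ≤ 1 := by nlinarith
  obtain ⟨K, hK, hKB⟩ := exists_subEnt_le_mul_le_hB (l := H - (h - g) / 4) hT hH hs0 hs1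
    (by linarith) (by linarith)
  exact ⟨K, hK.trans (EReal.coe_le_coe_iff.2 (by nlinarith)),
    hKB.trans_lt' (EReal.coe_lt_coe_iff.2 (by nlinarith))⟩

end CodedSets

section Gluing

variable [PseudoMetricSpace X] {T : X → X} {K : Set X} {n N M : ℕ} {x y : X} {h ε η δ : ℝ}

/-- `K` has entropy `h` up to an error `η` on a time scale which is uniform in `n`, and it is
`η`-concentrated around the orbit of `x` up to time `N`. Such sets can be glued together without
increasing the entropy. -/
structure IsEntropyPiece (T : X → X) (h : ℝ) (N : ℕ) (η : ℝ) (x : X) (K : Set X) : Prop where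
  subEnt_le : subEnt T K ≤ h
  le_hB : ((h - η : ℝ) : EReal) ≤ hB T K
  subset_bowenBall : K ⊆ bowenBall T N η x
  sepMaxCard_le (n : ℕ) : sepMaxCard T n η K ≤ ENNReal.ofReal (Real.exp ((h + η) * n))

lemma IsEntropyPiece.of_mem_bowenBall (hK : IsEntropyPiece T h N η y K) (hMN : M ≤ N)
    (hδη : η + δ ≤ ε) (hδ : 0 ≤ δ) (hy : y ∈ bowenBall T M δ x) : IsEntropyPiece T h M ε x K where
  subEnt_le := hK.subEnt_le
  le_hB := hK.le_hB.trans' (EReal.coe_le_coe_iff.2 (by linarith))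
  subset_bowenBall z hz i hi :=
    (dist_triangle _ _ _).trans (by linarith [hK.subset_bowenBall hz i (hi.trans_le hMN), hy i hi])
  sepMaxCard_le n := by
    refine (sepMaxCard_mono subset_rfl (by linarith)).trans ((hK.sepMaxCard_le n).trans ?_)
    gcongr
    linarith

lemma exists_isEntropyPiece [CompactSpace X] {H : ℝ} (hT : Continuous T)
    (hH : subEnt T (univ : Set X) = H) (h0 : 0 < h) (hhH : h ≤ H) (N : ℕ) (hη : 0 < η) :
    ∃ x K, IsEntropyPiece T h N η x K := by
  obtain ⟨K, hK, hKB⟩ := exists_subEnt_le_lt_hB (g := max (h / 2) (h - η)) hT hH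
    (lt_max_of_lt_left (half_pos h0)) (max_lt (half_lt_self h0) (sub_lt_self h hη)) hhH
  obtain ⟨M, hM⟩ := eventually_atTop.1 (subEnt_le_iff.1 hK η hη η hη)
  obtain ⟨S, hS⟩ := exists_finset_bowenBall_cover hT (max M N) (half_pos hη)
  have hcover : K ⊆ ⋃ y ∈ S, K ∩ bowenBall T (max M N) (η / 2) y := fun z hz => by
    obtain ⟨y, hy, hzy⟩ := hS z
    exact mem_biUnion hy ⟨hz, hzy⟩
  obtain ⟨y, -, hy⟩ := (Finset.lt_sup_iff).1
    (hKB.trans_le ((hB_mono hcover).trans (hB_biUnion_le)))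
  refine ⟨y, K ∩ bowenBall T (max M N) (η / 2) y, (subEnt_mono inter_subset_left).trans hK,
    hy.le.trans' (EReal.coe_le_coe_iff.2 (le_max_right _ _)),
    inter_subset_right.trans (bowenBall_subset (le_max_right _ _) (half_le_self hη.le)),
    fun n => ?_⟩
  rcases le_total M n with hMn | hnM
  · exact (sepMaxCard_mono inter_subset_left le_rfl).trans (hM n hMn)
  · refine (sepMaxCard_le_one (bowenDiamLE_bowenBall.mono inter_subset_right
      (hnM.trans (le_max_left M N)))).trans ?_
    exact ENNReal.one_le_ofReal.2 (Real.one_le_exp (by positivity))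

lemma exists_forall_isEntropyPiece [CompactSpace X] {H : ℝ} (hT : Continuous T)
    (hH : subEnt T (univ : Set X) = H) (h0 : 0 < h) (hhH : h ≤ H) :
    ∃ x, ∀ N, ∀ η > 0, ∃ K, IsEntropyPiece T h N η x K := by
  choose y K hK using fun j : ℕ =>
    exists_isEntropyPiece hT hH h0 hhH j (Nat.one_div_pos_of_nat (α := ℝ) (n := j))
  obtain ⟨x, -, hx⟩ := isCompact_univ.exists_mapClusterPt_of_frequently (f := y) (l := atTop)
    (Frequently.of_forall fun j => mem_univ (y j))
  refine ⟨x, fun N η hη => ?_⟩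
  have hsmall : ∀ᶠ j : ℕ in atTop, 1 / ((j : ℝ) + 1) < η / 2 :=
    tendsto_one_div_add_atTop_nhds_zero_nat.eventually_lt_const (half_pos hη)
  obtain ⟨j, hj, hjη, hNj⟩ := ((hx.frequently (bowenBall_mem_nhds hT (half_pos hη))).and_eventually
    (hsmall.and (eventually_ge_atTop N))).exists
  exact ⟨K j, (hK j).of_mem_bowenBall hNj (by linarith) (half_pos hη).le hj⟩

lemma sepMaxCard_iUnion_le {K : ℕ → Set X} {c : ℝ≥0∞} (hc : 1 ≤ c)
    (hK : ∀ k, sepMaxCard T n ε (K k) ≤ c) (htail : ∀ k ≥ n, K k ⊆ bowenBall T n (ε / 2) x) :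
    sepMaxCard T n ε (⋃ k, K k) ≤ (n + 1) * c := by
  have hcover : ⋃ k, K k ⊆ (⋃ k ∈ Finset.range n, K k) ∪ bowenBall T n (ε / 2) x := by
    refine iUnion_subset fun k => ?_
    rcases lt_or_ge k n with hkn | hnk
    · exact (subset_biUnion_of_mem (u := K) (Finset.mem_coe.2 (Finset.mem_range.2 hkn))).trans
        subset_union_left
    · exact (htail k hnk).trans subset_union_right
  calc sepMaxCard T n ε (⋃ k, K k)
      ≤ sepMaxCard T n ε (⋃ k ∈ Finset.range n, K k) +
          sepMaxCard T n ε (bowenBall T n (ε / 2) x) :=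
        (sepMaxCard_mono hcover le_rfl).trans (sepMaxCard_union_le)
    _ ≤ ∑ k ∈ Finset.range n, sepMaxCard T n ε (K k) + 1 :=
        add_le_add (sepMaxCard_biUnion_le _ _) (sepMaxCard_le_one bowenDiamLE_bowenBall)
    _ ≤ n * c + c := by
        gcongr
        simpa using Finset.sum_le_card_nsmul (Finset.range n) _ c fun k _ => hK k
    _ = (n + 1) * c := by ring

lemma eventually_add_one_le_exp (hδ : 0 < δ) :
    ∀ᶠ n : ℕ in atTop, (n : ℝ) + 1 ≤ Real.exp (δ * n) := by
  have hlittle := (isLittleO_pow_exp_pos_mul_atTop 1 hδ).add (isLittleO_pow_exp_pos_mul_atTop 0 hδ)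
  filter_upwards [(hlittle.comp_tendsto tendsto_natCast_atTop_atTop).bound one_pos] with n hn
  simpa [abs_of_nonneg (by positivity : (0 : ℝ) ≤ n + 1)] using hn

lemma subEnt_iUnion_le {K : ℕ → Set X} {η : ℕ → ℝ} (h0 : 0 ≤ h) (hη : Tendsto η atTop (𝓝 0))
    (hK : ∀ k, IsEntropyPiece T h k (η k) x (K k)) : subEnt T (⋃ k, K k) ≤ h := by
  refine subEnt_le_iff.2 fun ε hε δ hδ => ?_
  obtain ⟨L, hL⟩ := eventually_atTop.1
    ((hη.eventually_le_const (half_pos hε)).and (hη.eventually_le_const (half_pos hδ)))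
  have hinitial : ∀ᶠ n : ℕ in atTop, ∀ k ∈ Finset.range L,
      sepMaxCard T n ε (K k) ≤ ENNReal.ofReal (Real.exp ((h + δ / 2) * n)) :=
    (Filter.eventually_all_finset _).2 fun k _ =>
      subEnt_le_iff.1 (hK k).subEnt_le ε hε _ (half_pos hδ)
  filter_upwards [hinitial, eventually_ge_atTop L, eventually_add_one_le_exp (half_pos hδ)]
    with n hn hLn hexp
  have hpiece (k) : sepMaxCard T n ε (K k) ≤ ENNReal.ofReal (Real.exp ((h + δ / 2) * n)) := by
    rcases lt_or_ge k L with hkL | hLk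
    · exact hn k (Finset.mem_range.2 hkL)
    · refine (sepMaxCard_mono subset_rfl ((hL k hLk).1.trans (half_le_self hε.le))).trans
        (((hK k).sepMaxCard_le n).trans ?_)
      gcongr
      exact (hL k hLk).2
  have hball : ∀ k ≥ n, K k ⊆ bowenBall T n (ε / 2) x := fun k hk =>
    (hK k).subset_bowenBall.trans (bowenBall_subset hk (hL k (hLn.trans hk)).1)
  refine (sepMaxCard_iUnion_le (ENNReal.one_le_ofReal.2 (Real.one_le_exp (by positivity))) hpiece
    hball).trans ?_
  calc (n + 1) * ENNReal.ofReal (Real.exp ((h + δ / 2) * n))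
      = ENNReal.ofReal ((n + 1) * Real.exp ((h + δ / 2) * n)) := by
        rw [ENNReal.ofReal_mul (by positivity), ENNReal.ofReal_add (by positivity) zero_le_one,
          ENNReal.ofReal_natCast, ENNReal.ofReal_one]
    _ ≤ ENNReal.ofReal (Real.exp (δ / 2 * n) * Real.exp ((h + δ / 2) * n)) := by gcongr
    _ = ENNReal.ofReal (Real.exp ((h + δ) * n)) := by
        rw [← Real.exp_add]
        ring_nf

lemma exists_subEnt_le_le_hB [CompactSpace X] {H : ℝ} (hT : Continuous T)
    (hH : subEnt T (univ : Set X) = H) (h0 : 0 < h) (hhH : h ≤ H) :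
    ∃ K : Set X, subEnt T K ≤ h ∧ h ≤ hB T K := by
  obtain ⟨x, hx⟩ := exists_forall_isEntropyPiece hT hH h0 hhH
  choose K hK using fun k : ℕ => hx k (1 / ((k : ℝ) + 1)) Nat.one_div_pos_of_nat
  have hη := tendsto_one_div_add_atTop_nhds_zero_nat (𝕜 := ℝ)
  have hlim : Tendsto (fun k : ℕ => ((h - 1 / ((k : ℝ) + 1) : ℝ) : EReal)) atTop (𝓝 h) :=
    EReal.tendsto_coe.2 (by simpa only [sub_zero] using hη.const_sub h)
  exact ⟨⋃ k, K k, subEnt_iUnion_le h0.le hη hK,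
    le_of_tendsto' hlim fun k => (hK k).le_hB.trans (hB_mono (subset_iUnion K k))⟩

lemma nonempty_of_subEnt_nonneg (hK : 0 ≤ subEnt T K) : K.Nonempty := by
  by_contra! hempty
  simp [hempty, subEnt_empty] at hK

end Gluing

lemma exists_isCompact_hB_eq_subEnt_eq [PseudoMetricSpace X] [CompactSpace X] {T : X → X}
    (hT : Continuous T) {h H : ℝ} (hH : subEnt T (univ : Set X) = H) (h0 : 0 ≤ h) (hhH : h ≤ H) :
    ∃ K : Set X, K.Nonempty ∧ IsCompact K ∧ hB T K = h ∧ subEnt T K = h := by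
  suffices hK : ∃ K : Set X, subEnt T K ≤ h ∧ h ≤ hB T K by
    obtain ⟨K, hupper, hlower⟩ := hK
    have hlower_closure : h ≤ hB T (closure K) := hlower.trans (hB_mono subset_closure)
    have hsub : subEnt T (closure K) ≤ h := (subEnt_closure_le hT).trans hupper
    have hle : hB T (closure K) ≤ subEnt T (closure K) := hB_le_subEnt hT
    have hent : subEnt T (closure K) = h := hsub.antisymm (hlower_closure.trans hle)
    exact ⟨closure K, nonempty_of_subEnt_nonneg (hent ▸ EReal.coe_nonneg.2 h0),
      isClosed_closure.isCompact, (hle.trans hsub).antisymm hlower_closure, hent⟩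
  rcases h0.eq_or_lt with rfl | hpos
  · obtain ⟨x, -⟩ := nonempty_of_subEnt_nonneg (hH ▸ EReal.coe_nonneg.2 hhH)
    exact ⟨{x}, subEnt_singleton.le, hB_nonneg (singleton_nonempty x)⟩
  · exact exists_subEnt_le_le_hB hT hH hpos hhH

theorem finiteEntropy_lowerable_general {X : Type*} [PseudoMetricSpace X] [CompactSpace X]
    {T : X → X} (hT : Continuous T) (hfin : subEnt T (univ : Set X) < ⊤) :
    (∀ h : ℝ, 0 ≤ h → (h : EReal) ≤ subEnt T (univ : Set X) →
      ∃ K : Set X, K.Nonempty ∧ IsCompact K ∧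
        hB T K = (h : EReal) ∧ subEnt T K = (h : EReal)) ∧
    Lowerable T := by
  have hreal (h : ℝ) (h0 : 0 ≤ h) (hle : (h : EReal) ≤ subEnt T (univ : Set X)) :
      ∃ K : Set X, K.Nonempty ∧ IsCompact K ∧ hB T K = h ∧ subEnt T K = h := by
    have hH : subEnt T (univ : Set X) = (subEnt T (univ : Set X)).toReal :=
      (EReal.coe_toReal hfin.ne (ne_bot_of_le_ne_bot (EReal.coe_ne_bot h) hle)).symm
    exact exists_isCompact_hB_eq_subEnt_eq hT hH h0 (EReal.coe_le_coe_iff.1 (hH ▸ hle))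
  refine ⟨hreal, fun h h0 hle => ?_⟩
  lift h to ℝ using ⟨(hle.trans_lt hfin).ne, ne_bot_of_le_ne_bot EReal.zero_ne_bot h0⟩
  obtain ⟨K, hne, hcompact, -, hent⟩ := hreal h (EReal.coe_nonneg.1 h0) hle
  exact ⟨K, hne, hcompact, hent⟩

/-- Every TDS with finite topological entropy is lowerable: for every real
`h` with `0 ≤ h ≤ h_top(T,X)` there is a non-empty compact `K_h ⊆ X` with
`h^B(T,K_h) = h(T,K_h) = h`. -/
theorem finiteEntropy_lowerable {X : Type*} [MetricSpace X] [CompactSpace X]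
    (T : X ≃ₜ X) (hfin : subEnt (⇑T) (univ : Set X) < ⊤) :
    (∀ h : ℝ, 0 ≤ h → (h : EReal) ≤ subEnt (⇑T) (univ : Set X) →
      ∃ K : Set X, K.Nonempty ∧ IsCompact K ∧
        hB (⇑T) K = (h : EReal) ∧ subEnt (⇑T) K = (h : EReal)) ∧
    Lowerable (⇑T) :=
  finiteEntropy_lowerable_general T.continuous hfin
end
end

section
/- Let π : (X,T) → (Y,S) be a factor map between general topological dynamical systems and let E ⊆ X be a non-empty compact subset. Then h(S, π(E)) ≤ h(T,E) ≤ h(S, π(E)) + h_top(T,X|π). In particular, if h_top(S,Y) < ∞ then h(T,E) − h(S,π(E)) ≤ h_top(T,X|π) for every non-empty compact E ⊆ X. -/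
open Filter Set Metric MeasureTheory
open scoped ENNReal Topology

noncomputable section

variable {X Y : Type*}

/-! The first inequality is the behaviour of entropy under semiconjugacies. The second is Bowen's
argument. Let `B` be greater than the exponential of the entropy of every fibre, and let `U` be an
entourage of `X`. For each `y` there is a time `m` such that the fibre over `y` has a cover by at
most `B ^ m` many `(U, m)`-dynamical balls. As the balls are open and `π` is closed, this cover
works over a neighbourhood of `y`, so by compactness the times `m` are at most some `M` and the
neighbourhoods are all of the form `ball y V`. Concatenating the covers met along an orbit, the
preimage of every `(V, n)`-dynamical ball of `Y` is covered by `B ^ (n + M)` sets whose points stay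
`U`-close to a common sequence of length `n`. Admitting arbitrary sequences as centres, and not only
orbits, is what keeps `U` from growing at each concatenation. -/

section FactorEntropy

open Dynamics ExpGrowth Function UniformSpace
open scoped SetRel Uniformity

section ShadowCover

variable {T : X → X} {K L : Set X} {U : SetRel X X} {m n : ℕ} {C D : Set (ℕ → X)}

/-- A set `C` of sequences is a `(U, n)`-shadow cover of `K` if the orbit of each point of `K` is
`U`-close to a member of `C` up to time `n`. Unlike in `Dynamics.IsDynCoverOf`, the members of `C`
need not be orbits of `T`. -/
def IsShadowCover (T : X → X) (K : Set X) (U : SetRel X X) (n : ℕ) (C : Set (ℕ → X)) : Prop :=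
  ∀ ⦃x⦄, x ∈ K → ∃ z ∈ C, ∀ k < n, (T^[k] x, z k) ∈ U

/-- The smallest cardinality of a `(U, n)`-shadow cover of `K`, the analogue of
`Dynamics.coverMincard` for shadow covers. -/
def shadowMincard (T : X → X) (K : Set X) (U : SetRel X X) (n : ℕ) : ℕ∞ :=
  sInf (encard '' {C | IsShadowCover T K U n C})

lemma IsShadowCover.shadowMincard_le_encard (hC : IsShadowCover T K U n C) :
    shadowMincard T K U n ≤ C.encard :=
  sInf_le (mem_image_of_mem _ hC)

lemma isShadowCover_of_isDynCoverOf {s : Set X} (hs : IsDynCoverOf T K U n s) :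
    IsShadowCover T K U n ((fun x k ↦ T^[k] x) '' s) := by
  intro x hx
  obtain ⟨y, hy, hxy⟩ := hs hx
  exact ⟨_, mem_image_of_mem _ hy, mem_dynEntourage.1 hxy⟩

lemma shadowMincard_le_coverMincard : shadowMincard T K U n ≤ coverMincard T K U n :=
  le_iInf₂ fun s hs ↦ (isShadowCover_of_isDynCoverOf hs).shadowMincard_le_encard.trans <|
    (encard_image_le _ _).trans_eq (encard_coe_eq_coe_finsetCard s)

lemma IsShadowCover.mono (hC : IsShadowCover T L U n C) (hKL : K ⊆ L) (hmn : m ≤ n) :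
    IsShadowCover T K U m C := fun _ hx ↦
  (hC (hKL hx)).imp fun _ hz ↦ ⟨hz.1, fun k hk ↦ hz.2 k (hk.trans_le hmn)⟩

lemma shadowMincard_mono (hKL : K ⊆ L) (hmn : m ≤ n) :
    shadowMincard T K U m ≤ shadowMincard T L U n :=
  sInf_le_sInf (image_mono fun _ hC ↦ hC.mono hKL hmn)

lemma shadowMincard_zero_le_one [Nonempty X] : shadowMincard T K U 0 ≤ 1 := by
  inhabit X
  rw [← encard_singleton fun _ : ℕ ↦ (default : X)]
  exact IsShadowCover.shadowMincard_le_encard fun _ _ ↦ ⟨_, rfl, by simp⟩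

variable (T K U n) in
lemma exists_isShadowCover_encard_eq [U.IsRefl] :
    ∃ C, IsShadowCover T K U n C ∧ C.encard = shadowMincard T K U n :=
  csInf_mem (s := encard '' {C | IsShadowCover T K U n C}) <|
    .image _ ⟨univ, fun x _ ↦ ⟨fun k ↦ T^[k] x, mem_univ _, fun _ _ ↦ SetRel.rfl U⟩⟩

lemma IsShadowCover.append (hC : IsShadowCover T K U m C)
    (hD : IsShadowCover T (T^[m] '' K) U n D) :
    IsShadowCover T K U (m + n)
      (image2 (fun z w k ↦ if k < m then z k else w (k - m)) C D) := by
  intro x hx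
  obtain ⟨z, hz, hxz⟩ := hC hx
  obtain ⟨w, hw, hxw⟩ := hD (mem_image_of_mem _ hx)
  refine ⟨_, mem_image2_of_mem hz hw, fun k hk ↦ ?_⟩
  split_ifs with hkm
  · exact hxz k hkm
  · have := hxw (k - m) (by lia)
    rwa [← iterate_add_apply, Nat.sub_add_cancel (not_lt.1 hkm)] at this

lemma shadowMincard_add_le [U.IsRefl] :
    shadowMincard T K U (m + n) ≤ shadowMincard T K U m * shadowMincard T (T^[m] '' K) U n := by
  obtain ⟨C, hC, hC_card⟩ := exists_isShadowCover_encard_eq T K U m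
  obtain ⟨D, hD, hD_card⟩ := exists_isShadowCover_encard_eq T (T^[m] '' K) U n
  grw [(hC.append hD).shadowMincard_le_encard, ← image_prod, encard_image_le, encard_prod, hC_card,
    hD_card]

lemma shadowMincard_biUnion_le [U.IsRefl] {ι : Type*} (s : Finset ι) (K : ι → Set X) :
    shadowMincard T (⋃ i ∈ s, K i) U n ≤ ∑ i ∈ s, shadowMincard T (K i) U n := by
  choose C hC hC_card using fun i ↦ exists_isShadowCover_encard_eq T (K i) U n
  have hC_union : IsShadowCover T (⋃ i ∈ s, K i) U n (⋃ i ∈ s, C i) := by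
    intro x hx
    obtain ⟨i, hi, hxi⟩ := mem_iUnion₂.1 hx
    obtain ⟨z, hz, hxz⟩ := hC i hxi
    exact ⟨z, mem_iUnion₂.2 ⟨i, hi, hz⟩, hxz⟩
  simpa only [hC_card] using
    hC_union.shadowMincard_le_encard.trans (s.set_encard_biUnion_le C)

/-- A sequence shadowed by no orbit is useless, and one shadowed by the orbit of `x` may be replaced
by that orbit at the cost of doubling `U`. -/
lemma IsShadowCover.exists_isDynCoverOf [U.IsSymm] (hC : IsShadowCover T K U n C) :
    ∃ s : Set X, IsDynCoverOf T K (U ○ U) n s ∧ s.encard ≤ C.encard := by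
  obtain rfl | ⟨x₀, -⟩ := K.eq_empty_or_nonempty
  · exact ⟨∅, isDynCoverOf_empty, by simp⟩
  have : Nonempty X := ⟨x₀⟩
  choose! f hf using fun (z : ℕ → X) (hz : ∃ x, ∀ k < n, (T^[k] x, z k) ∈ U) ↦ hz
  refine ⟨f '' {z ∈ C | ∃ x, ∀ k < n, (T^[k] x, z k) ∈ U}, fun x hx ↦ ?_,
    (encard_image_le _ _).trans (encard_le_encard (sep_subset _ _))⟩
  obtain ⟨z, hzC, hxz⟩ := hC hx
  have hz : ∃ x, ∀ k < n, (T^[k] x, z k) ∈ U := ⟨x, hxz⟩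
  exact ⟨f z, mem_image_of_mem f ⟨hzC, hz⟩,
    mem_dynEntourage.2 fun k hk ↦ ⟨z k, hxz k hk, SetRel.symm U (hf z hz k hk)⟩⟩

lemma coverMincard_comp_self_le_shadowMincard [U.IsSymm] :
    coverMincard T K (U ○ U) n ≤ shadowMincard T K U n := by
  refine le_sInf (forall_mem_image.2 fun C hC ↦ ?_)
  obtain ⟨s, hs, hs_card⟩ := hC.exists_isDynCoverOf
  refine le_trans ?_ hs_card
  obtain hs_inf | hs_fin := s.finite_or_infinite.symm
  · exact hs_inf.encard_eq ▸ le_top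
  · lift s to Finset X using hs_fin
    exact hs.coverMincard_le_card.trans_eq (encard_coe_eq_coe_finsetCard s).symm

end ShadowCover

section OrbitConcatenation

variable {T : X → X} {F : Set X} {U W : SetRel X X} {B : ℝ≥0∞} {M : ℕ}

lemma mapsTo_iterate_ball_dynEntourage (T : X → X) (W : SetRel X X) (m n : ℕ) (x : X) :
    MapsTo T^[m] (UniformSpace.ball x (dynEntourage T W (m + n)))
      (UniformSpace.ball (T^[m] x) (dynEntourage T W n)) := by
  intro y hy
  simp only [mem_ball_dynEntourage, ← iterate_add_apply] at hy ⊢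
  exact fun k hk ↦ hy (k + m) (by lia)

lemma shadowMincard_ball_dynEntourage_le [U.IsRefl] (hB : 1 ≤ B)
    (hW : ∀ x, ∃ m, 0 < m ∧ m ≤ M ∧ shadowMincard T (UniformSpace.ball x W) U m ≤ B ^ m)
    (n : ℕ) (x : X) :
    shadowMincard T (UniformSpace.ball x (dynEntourage T W n)) U n ≤ B ^ (n + M) := by
  induction n using Nat.strong_induction_on generalizing x with | h n ih => ?_
  obtain rfl | hn := n.eq_zero_or_pos
  · have : Nonempty X := ⟨x⟩
    exact le_trans (mod_cast shadowMincard_zero_le_one) (one_le_pow₀ hB)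
  have h_ball : UniformSpace.ball x (dynEntourage T W n) ⊆ UniformSpace.ball x W :=
    ball_mono ((dynEntourage_antitone T W hn).trans_eq dynEntourage_one) x
  obtain ⟨m, hm_pos, hmM, hm⟩ := hW x
  obtain hnm | ⟨k, rfl⟩ := (le_total n m).imp_right Nat.exists_eq_add_of_le
  · grw [shadowMincard_mono h_ball hnm, hm]
    exact pow_le_pow_right₀ hB (by lia)
  calc (shadowMincard T (UniformSpace.ball x (dynEntourage T W (m + k))) U (m + k) : ℝ≥0∞)
    _ ≤ shadowMincard T (UniformSpace.ball x W) U m *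
        shadowMincard T (UniformSpace.ball (T^[m] x) (dynEntourage T W k)) U k := by
      grw [← ENat.toENNReal_mul, shadowMincard_add_le,
        shadowMincard_mono (mapsTo_iterate_ball_dynEntourage T W m k x).image_subset le_rfl,
        shadowMincard_mono h_ball le_rfl]
    _ ≤ B ^ m * B ^ (k + M) := by grw [hm, ih k (by lia)]
    _ = B ^ (m + k + M) := by rw [← pow_add, add_assoc]

lemma shadowMincard_le_coverMincard_mul [U.IsRefl] [W.IsSymm] {N : ℝ≥0∞} {n : ℕ} (hN : N ≠ 0)
    (hW : ∀ x, shadowMincard T (UniformSpace.ball x (dynEntourage T W n)) U n ≤ N) :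
    shadowMincard T F U n ≤ coverMincard T F W n * N := by
  obtain h_top | h_lt := eq_top_or_lt_top (coverMincard T F W n)
  · simp [h_top, ENNReal.top_mul hN]
  obtain ⟨s, hs, hs_card⟩ := (coverMincard_finite_iff T F W n).1 h_lt
  have hF : F ⊆ ⋃ y ∈ s, UniformSpace.ball y (dynEntourage T W n) :=
    isCover_iff_subset_iUnion_ball.1 hs
  calc (shadowMincard T F U n : ℝ≥0∞)
    _ ≤ ∑ y ∈ s, (shadowMincard T (UniformSpace.ball y (dynEntourage T W n)) U n : ℝ≥0∞) := by
      grw [shadowMincard_mono hF le_rfl, shadowMincard_biUnion_le]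
      exact (map_sum ENat.toENNRealRingHom _ s).le
    _ ≤ ∑ _y ∈ s, N := Finset.sum_le_sum fun y _ ↦ hW y
    _ = coverMincard T F W n * N := by simp [← hs_card]

lemma coverEntropyEntourage_comp_self_le_add_log [U.IsRefl] [U.IsSymm] [W.IsSymm]
    (hB : 1 ≤ B) (hB_top : B ≠ ⊤)
    (hW : ∀ x, ∃ m, 0 < m ∧ m ≤ M ∧ shadowMincard T (UniformSpace.ball x W) U m ≤ B ^ m) :
    coverEntropyEntourage T F (U ○ U) ≤ coverEntropyEntourage T F W + ENNReal.log B := by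
  have h_count (n : ℕ) :
      (coverMincard T F (U ○ U) n : ℝ≥0∞) ≤ B ^ M * (coverMincard T F W n * B ^ n) :=
    calc (coverMincard T F (U ○ U) n : ℝ≥0∞)
      _ ≤ shadowMincard T F U n := mod_cast coverMincard_comp_self_le_shadowMincard
      _ ≤ coverMincard T F W n * B ^ (n + M) :=
        shadowMincard_le_coverMincard_mul (pow_ne_zero _ (one_pos.trans_le hB).ne')
          (shadowMincard_ball_dynEntourage_le hB hW n)
      _ = B ^ M * (coverMincard T F W n * B ^ n) := by ring
  calc coverEntropyEntourage T F (U ○ U)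
    _ ≤ expGrowthSup ((fun n ↦ (coverMincard T F W n : ℝ≥0∞)) * fun n ↦ B ^ n) :=
      expGrowthSup_le_of_eventually_le (ENNReal.pow_ne_top hB_top) (.of_forall h_count)
    _ ≤ coverEntropyEntourage T F W + expGrowthSup (fun n ↦ B ^ n) :=
      expGrowthSup_mul_le (.inr (by simpa [expGrowthSup_pow]))
        (.inr (by simpa [expGrowthSup_pow] using (one_pos.trans_le hB).ne'))
    _ = coverEntropyEntourage T F W + ENNReal.log B := by rw [expGrowthSup_pow]

end OrbitConcatenation

section Fibers

variable {T : X → X} {π : X → Y}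

lemma exists_pos_coverMincard_le_pow {F : Set X} {U : SetRel X X} {B : ℝ≥0∞}
    (h : coverEntropyEntourage T F U < ENNReal.log B) :
    ∃ m, 0 < m ∧ coverMincard T F U m ≤ B ^ m := by
  obtain ⟨m, hm, hm_pos⟩ := ((eventually_le_exp h).and (eventually_gt_atTop 0)).exists
  refine ⟨m, hm_pos, hm.trans_eq ?_⟩
  rw [mul_comm, EReal.exp_nmul, ENNReal.exp_log]

lemma eventually_coverMincard_preimage_le [TopologicalSpace X] [TopologicalSpace Y]
    (hT : Continuous T) (hπ : IsClosedMap π) {U : SetRel X X} (hU : IsOpen U) (y : Y) (m : ℕ) :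
    ∀ᶠ s in (𝓝 y).smallSets,
      coverMincard T (π ⁻¹' s) U m ≤ coverMincard T (π ⁻¹' {y}) U m := by
  obtain h_top | h_lt := eq_top_or_lt_top (coverMincard T (π ⁻¹' {y}) U m)
  · simp [h_top]
  obtain ⟨c, hc, hc_card⟩ := (coverMincard_finite_iff T _ U m).1 h_lt
  have h_nhds : ∀ᶠ y' in 𝓝 y, ∀ x ∈ π ⁻¹' {y'}, ∃ z ∈ c, (x, z) ∈ dynEntourage T U m := by
    refine hπ.eventually_nhds_fiber y fun x hx ↦ ?_
    obtain ⟨z, hz, hxz⟩ := hc hx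
    have h_open : IsOpen {x | (x, z) ∈ dynEntourage T U m} :=
      (isOpen.dynEntourage hT hU m).preimage (by fun_prop)
    exact (h_open.eventually_mem hxz).mono fun x' hx' ↦ ⟨z, hz, hx'⟩
  filter_upwards [h_nhds.smallSets] with s hs
  rw [← hc_card]
  exact IsDynCoverOf.coverMincard_le_card fun x hx ↦ hs (π x) hx x rfl

lemma exists_uniform_coverMincard_preimage_ball_le [TopologicalSpace X] [UniformSpace Y]
    (hT : Continuous T) (hπ : IsClosedMap π) {U : SetRel X X} (hU : IsOpen U) {K : Set Y}
    (hK : IsCompact K) {B : ℝ≥0∞}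
    (h : ∀ y ∈ K, coverEntropyEntourage T (π ⁻¹' {y}) U < ENNReal.log B) :
    ∃ V ∈ 𝓤 Y, ∃ M, ∀ y ∈ K, ∃ m, 0 < m ∧ m ≤ M ∧
      coverMincard T (π ⁻¹' UniformSpace.ball y V) U m ≤ B ^ m := by
  choose! m hm_pos hm using fun y hy ↦ exists_pos_coverMincard_le_pow (h y hy)
  choose N hN hN_le using fun y ↦
    (eventually_smallSets.1 (eventually_coverMincard_preimage_le hT hπ hU y (m y)))
  obtain ⟨t, htK, hKt⟩ := hK.elim_nhds_subcover (fun y ↦ interior (N y)) fun y _ ↦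
    interior_mem_nhds.2 (hN y)
  obtain ⟨V, hV, hVt⟩ := lebesgue_number_lemma (U := fun y : t ↦ interior (N y)) hK
    (fun _ ↦ isOpen_interior) (hKt.trans_eq (iUnion_subtype (· ∈ t) fun y ↦ interior (N y)).symm)
  refine ⟨V, hV, t.sup m, fun y hy ↦ ?_⟩
  obtain ⟨⟨y', hy'⟩, hyy'⟩ := hVt y hy
  refine ⟨m y', hm_pos y' (htK y' hy'), Finset.le_sup hy', ?_⟩
  refine le_trans ?_ (hm y' (htK y' hy'))
  exact mod_cast hN_le y' _ (hyy'.trans interior_subset)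

end Fibers

section Semiconj

variable {T : X → X} {S : Y → Y} {π : X → Y}

lemma coverEntropyEntourage_comp_self_le_coverEntropy_image_add [UniformSpace X] [CompactSpace X]
    [UniformSpace Y] [T2Space Y] (hT : Continuous T) (hπ : Continuous π) (h : Semiconj π T S)
    {U : SetRel X X} [U.IsRefl] [U.IsSymm] (hU : IsOpen U) {B : ℝ≥0∞} (hB : 1 ≤ B) (hB_top : B ≠ ⊤)
    (h_fiber : ∀ y, coverEntropyEntourage T (π ⁻¹' {y}) U < ENNReal.log B) (F : Set X) :
    coverEntropyEntourage T F (U ○ U) ≤ coverEntropy S (π '' F) + ENNReal.log B := by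
  obtain ⟨V, hV, M, hVM⟩ := exists_uniform_coverMincard_preimage_ball_le hT hπ.isClosedMap hU
    (isCompact_range hπ) fun y _ ↦ h_fiber y
  obtain ⟨V', hV', hV'_symm, hV'V⟩ := comp_symm_mem_uniformity_sets hV
  have h_ball (x : X) : ∃ m, 0 < m ∧ m ≤ M ∧
      shadowMincard T (UniformSpace.ball x (Prod.map π π ⁻¹' (V' ○ V'))) U m ≤ B ^ m := by
    obtain ⟨m, hm_pos, hmM, hm⟩ := hVM (π x) (mem_range_self x)
    refine ⟨m, hm_pos, hmM, hm.trans' ?_⟩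
    grw [shadowMincard_le_coverMincard]
    exact mod_cast coverMincard_monotone_subset T U m fun x' hx' ↦ hV'V hx'
  calc coverEntropyEntourage T F (U ○ U)
    _ ≤ coverEntropyEntourage T F (Prod.map π π ⁻¹' (V' ○ V')) + ENNReal.log B :=
      coverEntropyEntourage_comp_self_le_add_log hB hB_top h_ball
    _ ≤ coverEntropy S (π '' F) + ENNReal.log B := by
      grw [le_coverEntropyEntourage_image h, coverEntropyEntourage_le_coverEntropy S _ hV']

theorem coverEntropy_le_coverEntropy_image_add_iSup_fiber [UniformSpace X] [CompactSpace X]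
    [UniformSpace Y] [T2Space Y] (hT : Continuous T) (hπ : Continuous π) (h : Semiconj π T S)
    (F : Set X) :
    coverEntropy T F ≤ coverEntropy S (π '' F) + ⨆ y, coverEntropy T (π ⁻¹' {y}) := by
  obtain rfl | ⟨x, hx⟩ := F.eq_empty_or_nonempty
  · simp
  have h_fiber_le (y : Y) : coverEntropy T (π ⁻¹' {y}) ≤ ⨆ y, coverEntropy T (π ⁻¹' {y}) :=
    le_iSup (fun y ↦ coverEntropy T (π ⁻¹' {y})) y
  have h_fiber_nonneg : 0 ≤ ⨆ y, coverEntropy T (π ⁻¹' {y}) :=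
    (coverEntropy_nonneg T (F := π ⁻¹' {π x}) ⟨x, rfl⟩).trans (h_fiber_le (π x))
  have h_image_nonneg : 0 ≤ coverEntropy S (π '' F) :=
    coverEntropy_nonneg S ⟨π x, mem_image_of_mem π hx⟩
  refine EReal.le_add_of_forall_gt (.inl (EReal.bot_lt_zero.trans_le h_image_nonneg).ne')
    (.inr (EReal.bot_lt_zero.trans_le h_fiber_nonneg).ne') fun a ha c hc ↦ ?_
  obtain ⟨b, hb, hbc⟩ := EReal.lt_iff_exists_real_btwn.1 hc
  refine iSup₂_le fun U hU ↦ ?_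
  obtain ⟨U', hU', hU'_open, hU'_symm, hU'U⟩ := comp_open_symm_mem_uniformity_sets hU
  have : SetRel.IsRefl U' := isRefl_of_mem_uniformity hU'
  have h_fiber (y : Y) : coverEntropyEntourage T (π ⁻¹' {y}) U' < ENNReal.log (EReal.exp b) := by
    grw [EReal.log_exp, coverEntropyEntourage_le_coverEntropy T _ hU', h_fiber_le y, hb]
  calc coverEntropyEntourage T F U
    _ ≤ coverEntropyEntourage T F (U' ○ U') := coverEntropyEntourage_antitone T F hU'U
    _ ≤ coverEntropy S (π '' F) + ENNReal.log (EReal.exp b) :=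
      coverEntropyEntourage_comp_self_le_coverEntropy_image_add hT hπ h hU'_open
        (EReal.one_le_exp_iff.2 (h_fiber_nonneg.trans hb.le)) (by simp) h_fiber F
    _ ≤ a + c := by grw [EReal.log_exp, ha, hbc]

end Semiconj

section Separated

variable [PseudoMetricSpace X] {T : X → X} {K : Set X} {n : ℕ} {ε : ℝ}

lemma IsSep.isDynNetIn {s : Set X} (hs : IsSep T n ε s) (hsK : s ⊆ K) :
    IsDynNetIn T K {p | dist p.1 p.2 ≤ ε / 2} n s := by
  refine ⟨hsK, fun x hx y hy hxy ↦ Set.disjoint_left.2 fun z hxz hyz ↦ ?_⟩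
  obtain ⟨i, hi, h_lt⟩ := hs hx hy hxy
  have hxzi : dist (T^[i] x) (T^[i] z) ≤ ε / 2 := mem_ball_dynEntourage.1 hxz i hi
  have hyzi : dist (T^[i] y) (T^[i] z) ≤ ε / 2 := mem_ball_dynEntourage.1 hyz i hi
  linarith [dist_triangle_right (T^[i] x) (T^[i] y) (T^[i] z)]

lemma isSep_of_isDynNetIn {s : Set X} (hε : 0 ≤ ε)
    (hs : IsDynNetIn T K {p | dist p.1 p.2 ≤ ε} n s) : IsSep T n ε s := by
  intro x hx y hy hxy
  by_contra! h_close
  exact Set.disjoint_left.1 (hs.2 hx hy hxy) (mem_ball_dynEntourage.2 h_close)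
    (mem_ball_dynEntourage.2 fun k _ ↦ show dist (T^[k] y) (T^[k] y) ≤ ε by simpa)

lemma sepMaxCard_le_netMaxcard :
    sepMaxCard T n ε K ≤ netMaxcard T K {p | dist p.1 p.2 ≤ ε / 2} n :=
  iSup₂_le fun _ hs ↦ mod_cast (hs.2.isDynNetIn hs.1).card_le_netMaxcard

lemma netMaxcard_le_sepMaxCard (hε : 0 ≤ ε) :
    netMaxcard T K {p | dist p.1 p.2 ≤ ε} n ≤ sepMaxCard T n ε K := by
  simp only [netMaxcard, ENat.toENNReal_iSup, ENat.toENNReal_coe]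
  exact iSup₂_le fun s hs ↦ le_iSup₂_of_le s ⟨hs.1, isSep_of_isDynNetIn hε hs⟩ le_rfl

theorem subEnt_eq_coverEntropy (T : X → X) (K : Set X) : subEnt T K = coverEntropy T K := by
  rw [coverEntropy_eq_iSup_basis_netEntropyEntourage uniformity_basis_dist_le]
  refine le_antisymm (iSup₂_mono' fun ε hε ↦ ⟨ε / 2, half_pos hε, ?_⟩) (iSup₂_mono fun ε hε ↦ ?_)
  · exact expGrowthSup_monotone fun _ ↦ sepMaxCard_le_netMaxcard
  · exact expGrowthSup_monotone fun _ ↦ netMaxcard_le_sepMaxCard hε.le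

end Separated

theorem factor_entropy_subset_general [PseudoMetricSpace X] [CompactSpace X] [MetricSpace Y]
    {T : X → X} {S : Y → Y} {π : X → Y} (hT : Continuous T) (hπ : Continuous π)
    (h : Semiconj π T S) (E : Set X) :
    subEnt S (π '' E) ≤ subEnt T E ∧ subEnt T E ≤ subEnt S (π '' E) + relEnt T π := by
  simp only [relEnt, subEnt_eq_coverEntropy]
  exact ⟨coverEntropy_image_le_of_uniformContinuous h
      (CompactSpace.uniformContinuous_of_continuous hπ) E,
    coverEntropy_le_coverEntropy_image_add_iSup_fiber hT hπ h E⟩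

end FactorEntropy

/-- Bowen-type inequality. For a factor map `π : (X,T) → (Y,S)` between
GTDSs and a non-empty compact `E ⊆ X`:
`h(S,π(E)) ≤ h(T,E) ≤ h(S,π(E)) + h_top(T,X|π)`; in particular, if `h_top(S,Y) < ∞` then
`h(T,E) - h(S,π(E)) ≤ h_top(T,X|π)`. -/
theorem factor_entropy_subset {X Y : Type*} [MetricSpace X] [CompactSpace X]
    [MetricSpace Y] [CompactSpace Y]
    (T : X → X) (hT : Continuous T) (S : Y → Y) (hS : Continuous S)
    (π : X → Y) (hπc : Continuous π) (hπs : Function.Surjective π)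
    (hcomm : π ∘ T = S ∘ π)
    (E : Set X) (hEne : E.Nonempty) (hEc : IsCompact E) :
    subEnt S (π '' E) ≤ subEnt T E ∧
    subEnt T E ≤ subEnt S (π '' E) + relEnt T π ∧
    (subEnt S (univ : Set Y) < ⊤ → subEnt T E - subEnt S (π '' E) ≤ relEnt T π) := by
  obtain ⟨h_image, h_fiber⟩ :=
    factor_entropy_subset_general hT hπc (Function.semiconj_iff_comp_eq.2 hcomm) E
  exact ⟨h_image, h_fiber, fun _ ↦ EReal.sub_le_of_le_add' h_fiber⟩
end
end
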